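/- Let P(x) = (x−x₁)(x−x₂)(x−x₃)(x−x₄)(x−x₅) with real roots x₁ < x₂ < x₃ < x₄ < x₅, let ξ₁ ≤ ξ₂ ≤ ξ₃ ≤ ξ₄ be the roots of P′ counted with multiplicity, and set z_j = (x_j + x_{j+1})/2 for j = 1, 2, 3, 4. Set m = min(z₂−z₁, z₃−z₂, z₄−z₃), M = max(z₂−z₁, z₃−z₂, z₄−z₃), m̃ = min(ξ₂−ξ₁, ξ₃−ξ₂, ξ₄−ξ₃), M̃ = max(ξ₂−ξ₁, ξ₃−ξ₂, ξ₄−ξ₃). Then it is impossible that simultaneously m > m̃ and M̃ ≤ M. (Equivalently: the case L−R+ is not realizable by a strictly hyperbolic polynomial of degree 5.) -/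

import Mathlib

namespace Quintic

structure Form where
  a : Nat
  b : Nat
  c : Nat
  d : Nat

noncomputable def Form.ev (p : Form) (x y z w : ℝ) : ℝ :=
  (p.a : ℝ) * (x)
    + (p.b : ℝ) * (y)
    + (p.c : ℝ) * (z)
    + (p.d : ℝ) * (w)

structure Q2 where
  aa : Nat
  ab : Nat
  ac : Nat
  ad : Nat
  bb : Nat
  bc : Nat
  bd : Nat
  cc : Nat
  cd : Nat
  dd : Nat

noncomputable def Q2.ev (p : Q2) (x y z w : ℝ) : ℝ :=
  (p.aa : ℝ) * (x * x)
    + (p.ab : ℝ) * (x * y)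
    + (p.ac : ℝ) * (x * z)
    + (p.ad : ℝ) * (x * w)
    + (p.bb : ℝ) * (y * y)
    + (p.bc : ℝ) * (y * z)
    + (p.bd : ℝ) * (y * w)
    + (p.cc : ℝ) * (z * z)
    + (p.cd : ℝ) * (z * w)
    + (p.dd : ℝ) * (w * w)

structure Q3 where
  aaa : Nat
  aab : Nat
  aac : Nat
  aad : Nat
  abb : Nat
  abc : Nat
  abd : Nat
  acc : Nat
  acd : Nat
  add : Nat
  bbb : Nat
  bbc : Nat
  bbd : Nat
  bcc : Nat
  bcd : Nat
  bdd : Nat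
  ccc : Nat
  ccd : Nat
  cdd : Nat
  ddd : Nat

noncomputable def Q3.ev (p : Q3) (x y z w : ℝ) : ℝ :=
  (p.aaa : ℝ) * (x * x * x)
    + (p.aab : ℝ) * (x * x * y)
    + (p.aac : ℝ) * (x * x * z)
    + (p.aad : ℝ) * (x * x * w)
    + (p.abb : ℝ) * (x * y * y)
    + (p.abc : ℝ) * (x * y * z)
    + (p.abd : ℝ) * (x * y * w)
    + (p.acc : ℝ) * (x * z * z)
    + (p.acd : ℝ) * (x * z * w)
    + (p.add : ℝ) * (x * w * w)
    + (p.bbb : ℝ) * (y * y * y)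
    + (p.bbc : ℝ) * (y * y * z)
    + (p.bbd : ℝ) * (y * y * w)
    + (p.bcc : ℝ) * (y * z * z)
    + (p.bcd : ℝ) * (y * z * w)
    + (p.bdd : ℝ) * (y * w * w)
    + (p.ccc : ℝ) * (z * z * z)
    + (p.ccd : ℝ) * (z * z * w)
    + (p.cdd : ℝ) * (z * w * w)
    + (p.ddd : ℝ) * (w * w * w)

structure Q4 where
  aaaa : Nat
  aaab : Nat
  aaac : Nat
  aaad : Nat
  aabb : Nat
  aabc : Nat
  aabd : Nat
  aacc : Nat
  aacd : Nat
  aadd : Nat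
  abbb : Nat
  abbc : Nat
  abbd : Nat
  abcc : Nat
  abcd : Nat
  abdd : Nat
  accc : Nat
  accd : Nat
  acdd : Nat
  addd : Nat
  bbbb : Nat
  bbbc : Nat
  bbbd : Nat
  bbcc : Nat
  bbcd : Nat
  bbdd : Nat
  bccc : Nat
  bccd : Nat
  bcdd : Nat
  bddd : Nat
  cccc : Nat
  cccd : Nat
  ccdd : Nat
  cddd : Nat
  dddd : Nat

noncomputable def Q4.ev (p : Q4) (x y z w : ℝ) : ℝ :=
  (p.aaaa : ℝ) * (x * x * x * x)
    + (p.aaab : ℝ) * (x * x * x * y)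
    + (p.aaac : ℝ) * (x * x * x * z)
    + (p.aaad : ℝ) * (x * x * x * w)
    + (p.aabb : ℝ) * (x * x * y * y)
    + (p.aabc : ℝ) * (x * x * y * z)
    + (p.aabd : ℝ) * (x * x * y * w)
    + (p.aacc : ℝ) * (x * x * z * z)
    + (p.aacd : ℝ) * (x * x * z * w)
    + (p.aadd : ℝ) * (x * x * w * w)
    + (p.abbb : ℝ) * (x * y * y * y)
    + (p.abbc : ℝ) * (x * y * y * z)
    + (p.abbd : ℝ) * (x * y * y * w)
    + (p.abcc : ℝ) * (x * y * z * z)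
    + (p.abcd : ℝ) * (x * y * z * w)
    + (p.abdd : ℝ) * (x * y * w * w)
    + (p.accc : ℝ) * (x * z * z * z)
    + (p.accd : ℝ) * (x * z * z * w)
    + (p.acdd : ℝ) * (x * z * w * w)
    + (p.addd : ℝ) * (x * w * w * w)
    + (p.bbbb : ℝ) * (y * y * y * y)
    + (p.bbbc : ℝ) * (y * y * y * z)
    + (p.bbbd : ℝ) * (y * y * y * w)
    + (p.bbcc : ℝ) * (y * y * z * z)
    + (p.bbcd : ℝ) * (y * y * z * w)
    + (p.bbdd : ℝ) * (y * y * w * w)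
    + (p.bccc : ℝ) * (y * z * z * z)
    + (p.bccd : ℝ) * (y * z * z * w)
    + (p.bcdd : ℝ) * (y * z * w * w)
    + (p.bddd : ℝ) * (y * w * w * w)
    + (p.cccc : ℝ) * (z * z * z * z)
    + (p.cccd : ℝ) * (z * z * z * w)
    + (p.ccdd : ℝ) * (z * z * w * w)
    + (p.cddd : ℝ) * (z * w * w * w)
    + (p.dddd : ℝ) * (w * w * w * w)

def mul11 (f g : Form) : Q2 :=
  ⟨f.a * g.a,
   f.a * g.b + f.b * g.a,
   f.a * g.c + f.c * g.a,
   f.a * g.d + f.d * g.a,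
   f.b * g.b,
   f.b * g.c + f.c * g.b,
   f.b * g.d + f.d * g.b,
   f.c * g.c,
   f.c * g.d + f.d * g.c,
   f.d * g.d⟩

def mul12 (f : Form) (q : Q2) : Q3 :=
  ⟨f.a * q.aa,
   f.a * q.ab + f.b * q.aa,
   f.a * q.ac + f.c * q.aa,
   f.a * q.ad + f.d * q.aa,
   f.a * q.bb + f.b * q.ab,
   f.a * q.bc + f.b * q.ac + f.c * q.ab,
   f.a * q.bd + f.b * q.ad + f.d * q.ab,
   f.a * q.cc + f.c * q.ac,
   f.a * q.cd + f.c * q.ad + f.d * q.ac,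
   f.a * q.dd + f.d * q.ad,
   f.b * q.bb,
   f.b * q.bc + f.c * q.bb,
   f.b * q.bd + f.d * q.bb,
   f.b * q.cc + f.c * q.bc,
   f.b * q.cd + f.c * q.bd + f.d * q.bc,
   f.b * q.dd + f.d * q.bd,
   f.c * q.cc,
   f.c * q.cd + f.d * q.cc,
   f.c * q.dd + f.d * q.cd,
   f.d * q.dd⟩

def mul13 (f : Form) (q : Q3) : Q4 :=
  ⟨f.a * q.aaa,
   f.a * q.aab + f.b * q.aaa,
   f.a * q.aac + f.c * q.aaa,
   f.a * q.aad + f.d * q.aaa,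
   f.a * q.abb + f.b * q.aab,
   f.a * q.abc + f.b * q.aac + f.c * q.aab,
   f.a * q.abd + f.b * q.aad + f.d * q.aab,
   f.a * q.acc + f.c * q.aac,
   f.a * q.acd + f.c * q.aad + f.d * q.aac,
   f.a * q.add + f.d * q.aad,
   f.a * q.bbb + f.b * q.abb,
   f.a * q.bbc + f.b * q.abc + f.c * q.abb,
   f.a * q.bbd + f.b * q.abd + f.d * q.abb,
   f.a * q.bcc + f.b * q.acc + f.c * q.abc,
   f.a * q.bcd + f.b * q.acd + f.c * q.abd + f.d * q.abc,
   f.a * q.bdd + f.b * q.add + f.d * q.abd,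
   f.a * q.ccc + f.c * q.acc,
   f.a * q.ccd + f.c * q.acd + f.d * q.acc,
   f.a * q.cdd + f.c * q.add + f.d * q.acd,
   f.a * q.ddd + f.d * q.add,
   f.b * q.bbb,
   f.b * q.bbc + f.c * q.bbb,
   f.b * q.bbd + f.d * q.bbb,
   f.b * q.bcc + f.c * q.bbc,
   f.b * q.bcd + f.c * q.bbd + f.d * q.bbc,
   f.b * q.bdd + f.d * q.bbd,
   f.b * q.ccc + f.c * q.bcc,
   f.b * q.ccd + f.c * q.bcd + f.d * q.bcc,
   f.b * q.cdd + f.c * q.bdd + f.d * q.bcd,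
   f.b * q.ddd + f.d * q.bdd,
   f.c * q.ccc,
   f.c * q.ccd + f.d * q.ccc,
   f.c * q.cdd + f.d * q.ccd,
   f.c * q.ddd + f.d * q.cdd,
   f.d * q.ddd⟩

def Q2.add (p q : Q2) : Q2 :=
  ⟨p.aa + q.aa,
   p.ab + q.ab,
   p.ac + q.ac,
   p.ad + q.ad,
   p.bb + q.bb,
   p.bc + q.bc,
   p.bd + q.bd,
   p.cc + q.cc,
   p.cd + q.cd,
   p.dd + q.dd⟩

def Q4.add (p q : Q4) : Q4 :=
  ⟨p.aaaa + q.aaaa,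
   p.aaab + q.aaab,
   p.aaac + q.aaac,
   p.aaad + q.aaad,
   p.aabb + q.aabb,
   p.aabc + q.aabc,
   p.aabd + q.aabd,
   p.aacc + q.aacc,
   p.aacd + q.aacd,
   p.aadd + q.aadd,
   p.abbb + q.abbb,
   p.abbc + q.abbc,
   p.abbd + q.abbd,
   p.abcc + q.abcc,
   p.abcd + q.abcd,
   p.abdd + q.abdd,
   p.accc + q.accc,
   p.accd + q.accd,
   p.acdd + q.acdd,
   p.addd + q.addd,
   p.bbbb + q.bbbb,
   p.bbbc + q.bbbc,
   p.bbbd + q.bbbd,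
   p.bbcc + q.bbcc,
   p.bbcd + q.bbcd,
   p.bbdd + q.bbdd,
   p.bccc + q.bccc,
   p.bccd + q.bccd,
   p.bcdd + q.bcdd,
   p.bddd + q.bddd,
   p.cccc + q.cccc,
   p.cccd + q.cccd,
   p.ccdd + q.ccdd,
   p.cddd + q.cddd,
   p.dddd + q.dddd⟩

def Q4.le (p q : Q4) : Bool :=
  Nat.ble p.aaaa q.aaaa
    && Nat.ble p.aaab q.aaab
    && Nat.ble p.aaac q.aaac
    && Nat.ble p.aaad q.aaad
    && Nat.ble p.aabb q.aabb
    && Nat.ble p.aabc q.aabc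
    && Nat.ble p.aabd q.aabd
    && Nat.ble p.aacc q.aacc
    && Nat.ble p.aacd q.aacd
    && Nat.ble p.aadd q.aadd
    && Nat.ble p.abbb q.abbb
    && Nat.ble p.abbc q.abbc
    && Nat.ble p.abbd q.abbd
    && Nat.ble p.abcc q.abcc
    && Nat.ble p.abcd q.abcd
    && Nat.ble p.abdd q.abdd
    && Nat.ble p.accc q.accc
    && Nat.ble p.accd q.accd
    && Nat.ble p.acdd q.acdd
    && Nat.ble p.addd q.addd
    && Nat.ble p.bbbb q.bbbb
    && Nat.ble p.bbbc q.bbbc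
    && Nat.ble p.bbbd q.bbbd
    && Nat.ble p.bbcc q.bbcc
    && Nat.ble p.bbcd q.bbcd
    && Nat.ble p.bbdd q.bbdd
    && Nat.ble p.bccc q.bccc
    && Nat.ble p.bccd q.bccd
    && Nat.ble p.bcdd q.bcdd
    && Nat.ble p.bddd q.bddd
    && Nat.ble p.cccc q.cccc
    && Nat.ble p.cccd q.cccd
    && Nat.ble p.ccdd q.ccdd
    && Nat.ble p.cddd q.cddd
    && Nat.ble p.dddd q.dddd

def Form.add (f g : Form) : Form := ⟨f.a + g.a, f.b + g.b, f.c + g.c, f.d + g.d⟩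
def Form.sub (f g : Form) : Form := ⟨f.a - g.a, f.b - g.b, f.c - g.c, f.d - g.d⟩
def Form.smul (k : Nat) (f : Form) : Form := ⟨k * f.a, k * f.b, k * f.c, k * f.d⟩
def Form.le (f g : Form) : Bool :=
  Nat.ble f.a g.a && Nat.ble f.b g.b && Nat.ble f.c g.c && Nat.ble f.d g.d

def add3 (f₁ f₂ : Form) (p₁ p₂ : Q3) : Q4 := (mul13 f₁ p₁).add (mul13 f₂ p₂)

/-- The final comparison: `f T + g U ≤ g T + f U + n S`. -/
def finalLe (f g n : Form) (T U S : Q3) : Bool :=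
  (add3 f g T U).le ((add3 g f T U).add (mul13 n S))

/-- Symmetric function `e₂` of three forms. -/
def esymm2 (f g h : Form) : Q2 := (mul11 f g).add (mul11 (f.add g) h)

def poly0 (n₀ gp gm n₂ n₃ n₄ : Form) : Bool :=
  finalLe gm gp n₀ (mul12 n₂ (mul11 n₃ n₄)) (mul12 n₀ (esymm2 n₂ n₃ n₄))
    (mul12 n₂ (mul11 n₃ n₄))

def poly1 (n₀ n₁ gp gm n₃ n₄ : Form) : Bool :=
  finalLe gp gm n₃ (mul12 (n₃.add n₄) (mul11 n₀ n₁)) (mul12 (n₀.add n₁) (mul11 n₃ n₄))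
    (mul12 n₄ (mul11 n₀ n₁))

def poly2 (n₀ n₁ n₂ gp gm n₄ : Form) : Bool :=
  finalLe gp gm n₄ (mul12 n₀ (mul11 n₁ n₂)) (mul12 n₄ (esymm2 n₀ n₁ n₂))
    (mul12 n₀ (mul11 n₁ n₂))

/-- A simplicial cone of gap vectors: each gap is a linear form in the cone coordinates. -/
structure Cell where
  a : Form
  b : Form
  c : Form
  d : Form

def X₀ : Form := ⟨0, 0, 0, 0⟩
def Cell.X₁ (C : Cell) : Form := C.a.smul 20000
def Cell.X₂ (C : Cell) : Form := (C.a.add C.b).smul 20000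
def Cell.X₃ (C : Cell) : Form := ((C.a.add C.b).add C.c).smul 20000
def Cell.X₄ (C : Cell) : Form := (((C.a.add C.b).add C.c).add C.d).smul 20000

def Cell.ell (C : Cell) (j : Nat) : Form :=
  match j with
  | 0 => C.a.add C.b
  | 1 => C.b.add C.c
  | _ => C.c.add C.d

def point0 (C : Cell) (t : Form) : Bool :=
  t.le C.X₂ && poly0 t (t.sub C.X₁) (C.X₁.sub t) (C.X₂.sub t) (C.X₃.sub t) (C.X₄.sub t)

def point1 (C : Cell) (t : Form) : Bool :=
  C.X₁.le t && t.le C.X₃ &&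
    poly1 t (t.sub C.X₁) (t.sub C.X₂) (C.X₂.sub t) (C.X₃.sub t) (C.X₄.sub t)

def point2 (C : Cell) (t : Form) : Bool :=
  C.X₂.le t && t.le C.X₄ &&
    poly2 t (t.sub C.X₁) (t.sub C.X₂) (t.sub C.X₃) (C.X₃.sub t) (C.X₄.sub t)

structure Cert where
  i : Nat
  j : Nat
  t : Form

def pointOK (C : Cell) (i : Nat) (t : Form) : Bool :=
  match i with
  | 0 => point0 C t
  | 1 => point1 C t
  | _ => point2 C t

def certOK (C : Cell) (e : Cert) : Bool :=
  pointOK C e.i e.t && pointOK C e.i (e.t.add ((C.ell e.j).smul 10001))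

inductive CTree (L : Type) where
  | split (i j α β : Nat) (l r : CTree L)
  | leaf (e : L)

inductive LeafM where
  | R
  | A (e : Cert)
  | B (e₁ e₂ : Cert)

def leafW (C : Cell) (e : Cert) : Bool :=
  Nat.beq e.i 0 && Nat.beq e.j 0 && certOK C e

def dom (C : Cell) (j k : Nat) : Bool := (C.ell k).le (C.ell j)

def leafM (C : Cell) : LeafM → Bool
  | .R => dom C 0 1 && dom C 0 2
  | .A e => dom C e.j 0 && dom C e.j 1 && dom C e.j 2 && certOK C e
  | .B e₁ e₂ => Nat.beq e₁.i 1 && Nat.beq e₂.i 2 && certOK C e₁ && certOK C e₂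

def Form.splitL (i j α β : Nat) (f : Form) : Form :=
  match i, j with
  | 0, 1 => ⟨α * f.a + β * f.b, f.b, f.c, f.d⟩
  | 0, 2 => ⟨α * f.a + β * f.c, f.b, f.c, f.d⟩
  | 0, 3 => ⟨α * f.a + β * f.d, f.b, f.c, f.d⟩
  | 1, 2 => ⟨f.a, α * f.b + β * f.c, f.c, f.d⟩
  | 1, 3 => ⟨f.a, α * f.b + β * f.d, f.c, f.d⟩
  | 2, 3 => ⟨f.a, f.b, α * f.c + β * f.d, f.d⟩
  | _, _ => f

def Form.splitR (i j α β : Nat) (f : Form) : Form :=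
  match i, j with
  | 0, 1 => ⟨f.a, α * f.a + β * f.b, f.c, f.d⟩
  | 0, 2 => ⟨f.a, f.b, α * f.a + β * f.c, f.d⟩
  | 0, 3 => ⟨f.a, f.b, f.c, α * f.a + β * f.d⟩
  | 1, 2 => ⟨f.a, f.b, α * f.b + β * f.c, f.d⟩
  | 1, 3 => ⟨f.a, f.b, f.c, α * f.b + β * f.d⟩
  | 2, 3 => ⟨f.a, f.b, f.c, α * f.c + β * f.d⟩
  | _, _ => f

def Cell.splitL (C : Cell) (i j α β : Nat) : Cell :=
  ⟨C.a.splitL i j α β, C.b.splitL i j α β, C.c.splitL i j α β, C.d.splitL i j α β⟩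

def Cell.splitR (C : Cell) (i j α β : Nat) : Cell :=
  ⟨C.a.splitR i j α β, C.b.splitR i j α β, C.c.splitR i j α β, C.d.splitR i j α β⟩

def check {L : Type} (f : Cell → L → Bool) : CTree L → Cell → Bool
  | .leaf e, C => f C e
  | .split i j α β l r, C =>
    Nat.blt 0 α && Nat.blt 0 β && check f l (C.splitL i j α β) && check f r (C.splitR i j α β)

/-- The cone `b ≤ c`, spanned by `(1,0,0,0)`, `(0,0,0,1)`, `(0,0,1,0)`, `(0,1,1,0)`. -/
def rootCell : Cell := ⟨⟨1, 0, 0, 0⟩, ⟨0, 0, 0, 1⟩, ⟨0, 0, 1, 1⟩, ⟨0, 1, 0, 0⟩⟩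

def treeW : CTree Cert :=
  .split 0 3 1 4
  (.leaf ⟨0, 0, 9572, 0, 0, 527⟩)
  (.split 0 2 1 2
  (.leaf ⟨0, 0, 9070, 0, 0, 9495⟩)
  (.split 0 1 1 1
  (.split 1 2 3 1
  (.leaf ⟨0, 0, 7553, 7955, 7834, 9849⟩)
  (.split 1 3 9 1
  (.split 0 3 5 1
  (.leaf ⟨0, 0, 47121, 11068, 7955, 9438⟩)
  (.leaf ⟨0, 0, 7438, 11068, 7955, 51139⟩))
  (.split 0 1 1 2
  (.leaf ⟨0, 0, 7745, 0, 9047, 11891⟩)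
  (.leaf ⟨0, 0, 7254, 7379, 7955, 11527⟩))))
  (.split 0 3 9 1
  (.split 1 3 5 1
  (.split 1 2 1 6
  (.split 0 2 1 6
  (.leaf ⟨0, 0, 125073, 96777, 7834, 9438⟩)
  (.split 0 3 1 2
  (.leaf ⟨0, 0, 93098, 96777, 125073, 9438⟩)
  (.leaf ⟨0, 0, 73547, 96777, 125073, 93098⟩)))
  (.split 0 3 1 2
  (.leaf ⟨0, 0, 93098, 47121, 96777, 9438⟩)
  (.leaf ⟨0, 0, 73547, 47121, 96777, 93098⟩)))
  (.leaf ⟨0, 0, 73547, 7254, 7834, 47121⟩))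
  (.leaf ⟨0, 0, 7000, 7254, 7834, 73547⟩))))

def treeM : CTree LeafM :=
  .split 0 2 1 1
  (.split 1 3 1 1
  (.split 1 2 1 3
  (.split 0 2 1 2
  (.leaf (.B ⟨1, 0, 32041, 35292, 6000, 15000⟩ ⟨2, 0, 62041, 84654, 16000, 29472⟩))
  (.split 0 3 1 1
  (.leaf (.B ⟨1, 0, 34346, 35292, 32041, 15000⟩ ⟨2, 0, 59498, 84654, 62041, 29472⟩))
  (.split 0 1 3 1
  (.leaf (.B ⟨1, 0, 94754, 35292, 32041, 34346⟩ ⟨2, 0, 175129, 84654, 62041, 59498⟩))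
  (.split 0 2 2 1
  (.leaf (.B ⟨1, 0, 72676, 94754, 32041, 34346⟩ ⟨2, 0, 122676, 175129, 62041, 59498⟩))
  (.split 0 3 2 1
  (.split 2 3 1 2
  (.split 1 3 1 3
  (.split 0 3 1 2
  (.leaf (.B ⟨1, 0, 143276, 197788, 140865, 34346⟩ ⟨2, 0, 238882, 353084, 241028, 59498⟩))
  (.split 0 1 3 1
  (.leaf (.B ⟨1, 0, 421940, 197788, 140865, 143276⟩ ⟨2, 0, 712939, 353084, 241028, 238882⟩))
  (.split 0 2 2 1
  (.leaf (.B ⟨1, 0, 290423, 421940, 140865, 143276⟩ ⟨2, 0, 480977, 712939, 241028, 238882⟩))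
  (.split 0 3 2 1
  (.leaf (.B ⟨1, 0, 292788, 421940, 290423, 143276⟩ ⟨2, 0, 478813, 712939, 480977, 238882⟩))
  (.split 0 1 6 1
  (.leaf (.B ⟨1, 0, 870663, 421940, 290423, 292788⟩ ⟨2, 0, 1432858, 712939, 480977, 478813⟩))
  (.split 0 2 4 1
  (.leaf (.B ⟨1, 0, 589616, 870663, 290423, 292788⟩ ⟨2, 0, 960945, 1432858, 480977, 478813⟩))
  (.split 0 3 4 1
  (.leaf (.B ⟨1, 0, 591959, 870663, 589616, 292788⟩ ⟨2, 0, 958770, 1432858, 960945, 478813⟩))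
  (.leaf (.A ⟨1, 1, 69804, 790655, 539611, 546954⟩)))))))))
  (.leaf (.A ⟨1, 1, 69804, 74752, 120863, 162785⟩)))
  (.leaf (.A ⟨1, 1, 69804, 74752, 62675, 120863⟩)))
  (.leaf (.A ⟨1, 1, 20403, 74752, 62675, 69804⟩)))))))
  (.split 0 1 2 1
  (.leaf (.B ⟨1, 0, 56618, 16462, 35292, 15000⟩ ⟨2, 0, 97540, 37240, 84654, 29472⟩))
  (.split 0 3 1 1
  (.leaf (.B ⟨1, 0, 34346, 56618, 35292, 15000⟩ ⟨2, 0, 59498, 97540, 84654, 29472⟩))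
  (.split 0 2 3 1
  (.leaf (.B ⟨1, 0, 94754, 56618, 35292, 34346⟩ ⟨2, 0, 175129, 97540, 84654, 59498⟩))
  (.split 0 3 2 1
  (.split 2 3 1 3
  (.split 1 3 1 2
  (.split 0 3 1 2
  (.leaf (.B ⟨1, 0, 143276, 125654, 197788, 34346⟩ ⟨2, 0, 238882, 216456, 353084, 59498⟩))
  (.split 0 1 2 1
  (.leaf (.B ⟨1, 0, 275230, 125654, 197788, 143276⟩ ⟨2, 0, 456349, 216456, 353084, 238882⟩))
  (.split 0 2 3 1
  (.leaf (.B ⟨1, 0, 421940, 275230, 197788, 143276⟩ ⟨2, 0, 712939, 456349, 353084, 238882⟩))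
  (.split 0 3 2 1
  (.leaf (.B ⟨1, 0, 292788, 275230, 421940, 143276⟩ ⟨2, 0, 478813, 456349, 712939, 238882⟩))
  (.split 0 1 4 1
  (.leaf (.B ⟨1, 0, 574447, 275230, 421940, 292788⟩ ⟨2, 0, 936288, 456349, 712939, 478813⟩))
  (.split 0 2 6 1
  (.leaf (.B ⟨1, 0, 870663, 574447, 421940, 292788⟩ ⟨2, 0, 1432858, 936288, 712939, 478813⟩))
  (.split 0 3 4 1
  (.leaf (.B ⟨1, 0, 591959, 574447, 870663, 292788⟩ ⟨2, 0, 958770, 936288, 1432858, 478813⟩))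
  (.leaf (.A ⟨1, 1, 69804, 529443, 790655, 546954⟩)))))))))
  (.leaf (.A ⟨1, 1, 69804, 51617, 162785, 110652⟩)))
  (.leaf (.A ⟨1, 1, 69804, 51617, 74752, 162785⟩)))
  (.leaf (.A ⟨1, 1, 20403, 51617, 74752, 69804⟩)))))))
  (.split 1 2 1 1
  (.split 2 3 3 1
  (.split 0 1 1 1
  (.leaf (.B ⟨1, 0, 27883, 7101, 35292, 16462⟩ ⟨2, 0, 54104, 24000, 84654, 37240⟩))
  (.split 0 3 2 1
  (.leaf (.B ⟨1, 0, 56618, 27883, 35292, 16462⟩ ⟨2, 0, 97540, 54104, 84654, 37240⟩))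
  (.split 0 2 3 1
  (.leaf (.B ⟨1, 0, 94754, 27883, 35292, 56618⟩ ⟨2, 0, 175129, 54104, 84654, 97540⟩))
  (.split 0 1 2 1
  (.leaf (.B ⟨1, 0, 69095, 27883, 94754, 56618⟩ ⟨2, 0, 114793, 54104, 175129, 97540⟩))
  (.split 0 3 4 1
  (.leaf (.B ⟨1, 0, 138364, 69095, 94754, 56618⟩ ⟨2, 0, 218880, 114793, 175129, 97540⟩))
  (.split 0 2 6 1
  (.leaf (.B ⟨1, 0, 216892, 69095, 94754, 138364⟩ ⟨2, 0, 357171, 114793, 175129, 218880⟩))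
  (.split 0 1 4 1
  (.leaf (.B ⟨1, 0, 150980, 69095, 216892, 138364⟩ ⟨2, 0, 236351, 114793, 357171, 218880⟩))
  (.leaf (.A ⟨1, 2, 20403, 140979, 196890, 133363⟩)))))))))
  (.split 0 1 1 1
  (.leaf (.B ⟨1, 0, 27883, 7101, 6000, 35292⟩ ⟨2, 0, 54104, 24000, 16000, 84654⟩))
  (.split 0 2 1 2
  (.leaf (.B ⟨1, 0, 32041, 27883, 6000, 35292⟩ ⟨2, 0, 62041, 54104, 16000, 84654⟩))
  (.split 0 3 3 1
  (.leaf (.B ⟨1, 0, 94754, 27883, 32041, 35292⟩ ⟨2, 0, 175129, 54104, 62041, 84654⟩))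
  (.split 0 1 2 1
  (.leaf (.B ⟨1, 0, 69095, 27883, 32041, 94754⟩ ⟨2, 0, 114793, 54104, 62041, 175129⟩))
  (.split 0 2 2 1
  (.leaf (.B ⟨1, 0, 72676, 69095, 32041, 94754⟩ ⟨2, 0, 122676, 114793, 62041, 175129⟩))
  (.split 0 3 6 1
  (.leaf (.B ⟨1, 0, 216892, 69095, 72676, 94754⟩ ⟨2, 0, 357171, 114793, 122676, 175129⟩))
  (.split 0 1 4 1
  (.leaf (.B ⟨1, 0, 150980, 69095, 72676, 216892⟩ ⟨2, 0, 236351, 114793, 122676, 357171⟩))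
  (.leaf (.A ⟨1, 2, 20403, 140979, 62675, 196890⟩))))))))))
  (.split 0 1 1 2
  (.leaf (.B ⟨1, 0, 21786, 0, 7101, 16462⟩ ⟨2, 0, 46232, 8000, 24000, 37240⟩))
  (.split 0 2 1 1
  (.leaf (.B ⟨1, 0, 27883, 21786, 7101, 16462⟩ ⟨2, 0, 54104, 46232, 24000, 37240⟩))
  (.split 0 3 2 1
  (.leaf (.B ⟨1, 0, 56618, 21786, 27883, 16462⟩ ⟨2, 0, 97540, 46232, 54104, 37240⟩))
  (.split 0 1 2 1
  (.leaf (.B ⟨1, 0, 64162, 21786, 27883, 56618⟩ ⟨2, 0, 106951, 46232, 54104, 97540⟩))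
  (.split 0 2 2 1
  (.leaf (.B ⟨1, 0, 69095, 64162, 27883, 56618⟩ ⟨2, 0, 114793, 106951, 54104, 97540⟩))
  (.split 0 1 4 1
  (.leaf (.B ⟨1, 0, 146996, 64162, 69095, 56618⟩ ⟨2, 0, 228517, 106951, 114793, 97540⟩))
  (.split 0 3 4 1
  (.leaf (.B ⟨1, 0, 138364, 146996, 69095, 56618⟩ ⟨2, 0, 218880, 228517, 114793, 97540⟩))
  (.split 0 2 4 1
  (.leaf (.B ⟨1, 0, 150980, 146996, 69095, 138364⟩ ⟨2, 0, 236351, 228517, 114793, 218880⟩))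
  (.leaf (.A ⟨0, 2, 7596, 43475, 43641, 42112⟩))))))))))))
  (.split 0 3 1 1
  (.split 0 1 1 1
  (.split 1 3 1 1
  (.split 1 2 1 2
  (.split 2 3 1 1
  (.split 0 3 1 2
  (.leaf (.B ⟨1, 0, 59998, 56618, 34346, 15000⟩ ⟨2, 0, 110726, 97540, 59498, 29472⟩))
  (.split 0 2 1 1
  (.leaf (.B ⟨1, 0, 65051, 56618, 34346, 59998⟩ ⟨2, 0, 111304, 97227, 59453, 110641⟩))
  (.leaf (.A ⟨1, 1, 29999, 51617, 60051, 49997⟩))))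
  (.split 0 2 1 2
  (.split 2 3 2 1
  (.split 0 3 1 2
  (.split 1 3 1 2
  (.split 2 3 1 2
  (.split 0 3 1 4
  (.leaf (.B ⟨1, 0, 277451, 125654, 143276, 34346⟩ ⟨2, 0, 469070, 216456, 238882, 59498⟩))
  (.split 0 2 1 1
  (.leaf (.B ⟨1, 0, 283479, 125654, 143276, 277451⟩ ⟨2, 0, 469990, 216456, 238882, 469070⟩))
  (.leaf (.A ⟨1, 1, 130020, 110652, 258476, 247448⟩))))
  (.split 1 2 1 2
  (.split 0 2 1 2
  (.split 2 3 2 1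
  (.split 0 3 1 2
  (.leaf (.B ⟨1, 0, 576309, 275230, 292788, 143276⟩ ⟨2, 0, 948760, 456349, 478813, 238882⟩))
  (.split 0 2 1 1
  (.leaf (.B ⟨1, 0, 582602, 275230, 292788, 576309⟩ ⟨2, 0, 949832, 456349, 478813, 948760⟩))
  (.leaf (.A ⟨1, 1, 269723, 250227, 537598, 526304⟩))))
  (.split 1 2 1 4
  (.split 0 2 1 4
  (.split 2 3 4 1
  (.split 0 3 1 2
  (.leaf (.B ⟨1, 0, 1174585, 574447, 591959, 292788⟩ ⟨2, 0, 1908580, 936288, 958770, 478813⟩))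
  (.leaf (.A ⟨1, 1, 548988, 529443, 546954, 1084576⟩)))
  (.leaf (.A ⟨1, 1, 548988, 529443, 69804, 546954⟩)))
  (.split 0 3 1 1
  (.split 2 3 1 2
  (.leaf (.B ⟨1, 0, 582602, 574447, 1174585, 292788⟩ ⟨2, 0, 949832, 936288, 1908580, 478813⟩))
  (.leaf (.A ⟨1, 1, 537598, 529443, 548988, 1084576⟩)))
  (.leaf (.A ⟨1, 1, 269723, 529443, 548988, 537598⟩))))
  (.split 0 3 1 1
  (.leaf (.B ⟨1, 0, 582602, 275230, 574447, 292788⟩ ⟨2, 0, 949832, 456349, 936288, 478813⟩))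
  (.leaf (.A ⟨1, 1, 269723, 250227, 529443, 537598⟩)))))
  (.split 0 3 1 1
  (.split 2 3 1 2
  (.leaf (.B ⟨1, 0, 283479, 275230, 576309, 143276⟩ ⟨2, 0, 469990, 456349, 948760, 238882⟩))
  (.leaf (.A ⟨1, 1, 258476, 250227, 269723, 526304⟩)))
  (.leaf (.A ⟨1, 1, 130020, 250227, 269723, 258476⟩))))
  (.split 0 3 1 1
  (.leaf (.B ⟨1, 0, 283479, 125654, 275230, 143276⟩ ⟨2, 0, 469990, 216456, 456349, 238882⟩))
  (.leaf (.A ⟨1, 1, 130020, 110652, 250227, 258476⟩)))))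
  (.leaf (.A ⟨1, 1, 130020, 51617, 69804, 110652⟩)))
  (.leaf (.A ⟨1, 1, 71182, 51617, 69804, 130020⟩)))
  (.leaf (.A ⟨1, 1, 71182, 51617, 20403, 69804⟩)))
  (.split 0 3 1 1
  (.split 2 3 1 2
  (.split 1 3 1 2
  (.split 0 3 1 2
  (.split 2 3 1 4
  (.leaf (.B ⟨1, 0, 134108, 125654, 277451, 34346⟩ ⟨2, 0, 230268, 216456, 469070, 59498⟩))
  (.leaf (.A ⟨1, 1, 119107, 110652, 130020, 247448⟩)))
  (.leaf (.A ⟨1, 1, 60051, 110652, 130020, 119107⟩)))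
  (.leaf (.A ⟨1, 1, 60051, 51617, 130020, 110652⟩)))
  (.leaf (.A ⟨1, 1, 60051, 51617, 71182, 130020⟩)))
  (.leaf (.A ⟨1, 1, 29999, 51617, 71182, 60051⟩)))))
  (.leaf (.B ⟨1, 0, 29999, 16462, 56618, 15000⟩ ⟨2, 0, 51882, 37240, 97540, 29472⟩)))
  (.split 1 2 2 1
  (.split 2 3 2 1
  (.leaf (.B ⟨1, 0, 29999, 21786, 56618, 16462⟩ ⟨2, 0, 51882, 46232, 97540, 37240⟩))
  (.split 1 2 1 2
  (.split 0 2 1 2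
  (.split 1 2 1 4
  (.split 2 3 4 1
  (.split 1 3 1 2
  (.leaf (.A ⟨1, 2, 71182, 239814, 133363, 51617⟩))
  (.leaf (.A ⟨0, 2, 23775, 43475, 42112, 66860⟩)))
  (.leaf (.A ⟨0, 2, 23775, 43475, 7596, 42112⟩)))
  (.split 2 3 1 2
  (.split 1 3 1 1
  (.split 2 3 1 4
  (.split 1 3 1 2
  (.split 0 3 1 1
  (.leaf (.B ⟨1, 0, 127751, 234087, 486013, 56618⟩ ⟨2, 0, 209733, 399249, 813063, 97540⟩))
  (.split 0 1 4 1
  (.leaf (.B ⟨1, 0, 518828, 234087, 486013, 127751⟩ ⟨2, 0, 847977, 399249, 813063, 209733⟩))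
  (.leaf (.A ⟨1, 2, 71182, 493825, 446009, 122750⟩))))
  (.split 0 1 2 1
  (.leaf (.B ⟨1, 0, 263301, 120828, 486013, 234087⟩ ⟨2, 0, 428562, 204271, 813063, 399249⟩))
  (.split 0 3 4 1
  (.leaf (.B ⟨1, 0, 518828, 263301, 486013, 234087⟩ ⟨2, 0, 847977, 428562, 813063, 399249⟩))
  (.split 0 2 7 1
  (.leaf (.B ⟨1, 0, 984185, 263301, 486013, 518828⟩ ⟨2, 0, 1598363, 428562, 813063, 847977⟩))
  (.leaf (.A ⟨0, 2, 23775, 72422, 279580, 142992⟩))))))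
  (.split 0 1 2 1
  (.leaf (.B ⟨1, 0, 263301, 120828, 259816, 486013⟩ ⟨2, 0, 428562, 204271, 423125, 813063⟩))
  (.split 0 2 4 1
  (.leaf (.B ⟨1, 0, 544474, 263301, 259816, 486013⟩ ⟨2, 0, 871744, 428562, 423125, 813063⟩))
  (.split 0 3 7 1
  (.leaf (.B ⟨1, 0, 984185, 263301, 544474, 486013⟩ ⟨2, 0, 1598363, 428562, 871744, 813063⟩))
  (.leaf (.A ⟨0, 2, 23775, 72422, 162225, 279580⟩))))))
  (.split 0 1 1 1
  (.leaf (.B ⟨1, 0, 135503, 64162, 259816, 120828⟩ ⟨2, 0, 218934, 106951, 423125, 204271⟩))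
  (.split 0 3 2 1
  (.leaf (.B ⟨1, 0, 263301, 135503, 259816, 120828⟩ ⟨2, 0, 428562, 218934, 423125, 204271⟩))
  (.leaf (.A ⟨0, 2, 23775, 37058, 66860, 72422⟩)))))
  (.split 0 1 1 1
  (.leaf (.B ⟨1, 0, 135503, 64162, 146996, 259816⟩ ⟨2, 0, 218934, 106951, 228517, 423125⟩))
  (.leaf (.A ⟨0, 2, 23775, 37058, 43475, 66860⟩)))))
  (.split 0 1 2 1
  (.split 1 3 1 1
  (.split 0 3 1 2
  (.split 1 3 1 2
  (.split 2 3 1 1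
  (.leaf (.B ⟨1, 0, 237401, 234087, 127751, 56618⟩ ⟨2, 0, 404891, 399249, 209733, 97540⟩))
  (.split 0 2 1 4
  (.split 1 2 1 4
  (.leaf (.A ⟨0, 2, 148259, 142992, 23775, 35260⟩))
  (.leaf (.B ⟨1, 0, 522343, 234087, 518828, 127751⟩ ⟨2, 0, 853710, 399249, 847977, 209733⟩)))
  (.leaf (.B ⟨1, 0, 237401, 234087, 522343, 127751⟩ ⟨2, 0, 404891, 399249, 853710, 209733⟩))))
  (.split 0 2 1 4
  (.split 1 2 1 2
  (.split 2 3 4 1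
  (.leaf (.B ⟨1, 0, 522343, 263301, 518828, 234087⟩ ⟨2, 0, 853710, 428562, 847977, 399249⟩))
  (.leaf (.A ⟨0, 2, 148259, 72422, 23775, 142992⟩)))
  (.leaf (.B ⟨1, 0, 522343, 120828, 263301, 234087⟩ ⟨2, 0, 853710, 204271, 428562, 399249⟩)))
  (.leaf (.B ⟨1, 0, 237401, 120828, 522343, 234087⟩ ⟨2, 0, 404891, 204271, 853710, 399249⟩))))
  (.split 0 2 1 2
  (.split 1 2 1 2
  (.split 2 3 4 1
  (.leaf (.B ⟨1, 0, 266591, 263301, 522343, 237401⟩ ⟨2, 0, 434263, 428562, 853710, 404891⟩))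
  (.leaf (.A ⟨0, 2, 77721, 72422, 23775, 148259⟩)))
  (.leaf (.B ⟨1, 0, 266591, 120828, 263301, 237401⟩ ⟨2, 0, 434263, 204271, 428562, 404891⟩)))
  (.leaf (.B ⟨1, 0, 123743, 120828, 266591, 237401⟩ ⟨2, 0, 209853, 204271, 434263, 404891⟩))))
  (.split 1 2 1 1
  (.split 0 2 1 2
  (.split 2 3 2 1
  (.leaf (.B ⟨1, 0, 266591, 135503, 263301, 120828⟩ ⟨2, 0, 434263, 218934, 428562, 204271⟩))
  (.leaf (.A ⟨0, 2, 77721, 37058, 23775, 72422⟩)))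
  (.leaf (.B ⟨1, 0, 123743, 135503, 266591, 120828⟩ ⟨2, 0, 209853, 218934, 434263, 204271⟩)))
  (.leaf (.B ⟨1, 0, 123743, 64162, 135503, 120828⟩ ⟨2, 0, 209853, 106951, 218934, 204271⟩))))
  (.split 0 2 2 1
  (.split 1 3 1 2
  (.split 0 3 1 2
  (.split 2 3 1 1
  (.leaf (.B ⟨1, 0, 244623, 237401, 127751, 56618⟩ ⟨2, 0, 410659, 404891, 209733, 97540⟩))
  (.split 1 2 1 4
  (.leaf (.A ⟨0, 2, 63326, 148259, 23775, 35260⟩))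
  (.leaf (.B ⟨1, 0, 244623, 237401, 522343, 127751⟩ ⟨2, 0, 410659, 404891, 853710, 209733⟩))))
  (.split 0 2 1 2
  (.split 1 2 1 4
  (.leaf (.A ⟨0, 2, 87901, 148259, 23775, 63326⟩))
  (.split 0 1 1 1
  (.leaf (.B ⟨1, 0, 511165, 237401, 522343, 244623⟩ ⟨2, 0, 844869, 404891, 853710, 410659⟩))
  (.leaf (.A ⟨0, 2, 87901, 141100, 148259, 63326⟩))))
  (.split 0 1 2 1
  (.split 1 2 1 1
  (.leaf (.A ⟨0, 2, 133824, 141100, 87901, 63326⟩))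
  (.leaf (.B ⟨1, 0, 499930, 237401, 511165, 244623⟩ ⟨2, 0, 836145, 404891, 844869, 410659⟩)))
  (.leaf (.A ⟨0, 2, 40235, 133824, 87901, 63326⟩)))))
  (.split 1 2 1 2
  (.split 0 2 1 2
  (.split 2 3 4 1
  (.split 0 3 1 1
  (.leaf (.B ⟨1, 0, 511165, 266591, 522343, 237401⟩ ⟨2, 0, 844869, 434263, 853710, 404891⟩))
  (.leaf (.A ⟨0, 2, 87901, 77721, 148259, 141100⟩)))
  (.leaf (.A ⟨0, 2, 87901, 77721, 23775, 148259⟩)))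
  (.split 0 3 2 1
  (.split 2 3 1 1
  (.leaf (.B ⟨1, 0, 499930, 266591, 511165, 237401⟩ ⟨2, 0, 836145, 434263, 844869, 404891⟩))
  (.leaf (.A ⟨0, 2, 133824, 77721, 87901, 141100⟩)))
  (.leaf (.A ⟨0, 2, 40235, 77721, 87901, 133824⟩))))
  (.leaf (.B ⟨1, 0, 131283, 123743, 266591, 237401⟩ ⟨2, 0, 215757, 209853, 434263, 404891⟩))))
  (.leaf (.B ⟨1, 0, 29999, 123743, 131283, 56618⟩ ⟨2, 0, 51882, 209853, 215757, 97540⟩)))))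
  (.leaf (.B ⟨1, 0, 29999, 21786, 64162, 56618⟩ ⟨2, 0, 51882, 46232, 106951, 97540⟩))))
  (.leaf (.A ⟨2, 2, 51882, 3000, 36231, 32240⟩))))
  (.split 2 3 1 1
  (.split 1 3 1 2
  (.leaf (.B ⟨1, 2, 33537, 59998, 34346, 15000⟩ ⟨2, 2, 49240, 110726, 59498, 29472⟩))
  (.split 1 2 1 1
  (.leaf (.B ⟨1, 2, 33537, 65051, 34346, 59998⟩ ⟨2, 2, 49343, 111286, 59483, 110726⟩))
  (.leaf (.B ⟨1, 2, 33537, 29999, 65051, 59998⟩ ⟨2, 2, 49240, 51882, 111300, 110726⟩))))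
  (.split 1 2 1 2
  (.split 0 2 1 2
  (.split 2 3 2 1
  (.split 1 3 1 2
  (.split 0 3 1 2
  (.split 2 3 1 2
  (.split 1 3 1 4
  (.leaf (.B ⟨1, 0, 137491, 277451, 143276, 34346⟩ ⟨2, 2, 228355, 469070, 238882, 59498⟩))
  (.split 1 2 1 1
  (.leaf (.B ⟨1, 0, 137491, 283479, 143276, 277451⟩ ⟨2, 2, 228355, 469990, 238882, 469070⟩))
  (.split 0 1 1 1
  (.leaf (.A ⟨1, 1, 257682, 130020, 258476, 247448⟩))
  (.leaf (.B ⟨1, 0, 137491, 277684, 283479, 277451⟩ ⟨2, 2, 228355, 459463, 469990, 469070⟩)))))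
  (.split 1 2 1 2
  (.split 0 2 1 2
  (.split 2 3 2 1
  (.split 1 3 1 2
  (.leaf (.B ⟨1, 0, 287024, 576309, 292788, 143276⟩ ⟨2, 2, 468233, 948760, 478813, 238882⟩))
  (.split 1 2 1 1
  (.leaf (.B ⟨1, 0, 287024, 582602, 292788, 576309⟩ ⟨2, 2, 468233, 949832, 478813, 948760⟩))
  (.split 0 1 1 1
  (.leaf (.A ⟨1, 1, 536832, 269723, 537598, 526304⟩))
  (.leaf (.B ⟨1, 0, 287024, 576836, 582602, 576309⟩ ⟨2, 2, 468233, 939252, 949832, 948760⟩)))))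
  (.split 1 2 1 4
  (.split 0 2 1 4
  (.split 2 3 4 1
  (.split 1 3 1 2
  (.leaf (.B ⟨1, 0, 586205, 1174585, 591959, 292788⟩ ⟨2, 2, 948167, 1908580, 958770, 478813⟩))
  (.leaf (.A ⟨1, 1, 546201, 548988, 546954, 1084576⟩)))
  (.leaf (.A ⟨1, 1, 546201, 548988, 69804, 546954⟩)))
  (.split 1 3 1 2
  (.leaf (.B ⟨1, 0, 287024, 1174585, 586205, 292788⟩ ⟨2, 2, 468233, 1908580, 948167, 478813⟩))
  (.split 0 1 2 1
  (.leaf (.A ⟨1, 1, 1083059, 548988, 546201, 1084576⟩))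
  (.leaf (.B ⟨1, 0, 287024, 1163067, 586205, 1174585⟩ ⟨2, 2, 468233, 1887395, 948167, 1908580⟩)))))
  (.split 1 3 1 1
  (.split 2 3 1 2
  (.leaf (.B ⟨1, 0, 287024, 582602, 1174585, 292788⟩ ⟨2, 2, 468233, 949832, 1908580, 478813⟩))
  (.split 0 2 2 1
  (.leaf (.A ⟨1, 1, 1083059, 537598, 548988, 1084576⟩))
  (.leaf (.B ⟨1, 0, 287024, 582602, 1163067, 1174585⟩ ⟨2, 2, 468233, 949832, 1887395, 1908580⟩))))
  (.split 0 1 1 1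
  (.leaf (.A ⟨1, 1, 536832, 269723, 548988, 537598⟩))
  (.split 0 2 2 1
  (.leaf (.A ⟨1, 1, 1083059, 536832, 548988, 537598⟩))
  (.leaf (.B ⟨1, 0, 287024, 576836, 1163067, 582602⟩ ⟨2, 2, 468233, 939252, 1887395, 949832⟩)))))))
  (.split 1 3 1 2
  (.leaf (.B ⟨1, 0, 137491, 576309, 287024, 143276⟩ ⟨2, 2, 228355, 948760, 468233, 238882⟩))
  (.split 0 1 2 1
  (.split 1 2 1 1
  (.leaf (.B ⟨1, 0, 564756, 576836, 287024, 576309⟩ ⟨2, 2, 927651, 939252, 468233, 948760⟩))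
  (.leaf (.A ⟨1, 1, 524752, 269723, 536832, 526304⟩)))
  (.leaf (.B ⟨1, 0, 137491, 564756, 287024, 576309⟩ ⟨2, 2, 228355, 927651, 468233, 948760⟩)))))
  (.split 1 3 1 1
  (.split 2 3 1 2
  (.leaf (.B ⟨1, 0, 137491, 283479, 576309, 143276⟩ ⟨2, 2, 228355, 469990, 948760, 238882⟩))
  (.split 0 2 2 1
  (.leaf (.A ⟨1, 1, 524752, 258476, 269723, 526304⟩))
  (.leaf (.B ⟨1, 0, 137491, 283479, 564756, 576309⟩ ⟨2, 2, 228355, 469990, 927651, 948760⟩))))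
  (.split 0 1 1 1
  (.leaf (.A ⟨1, 1, 257682, 130020, 269723, 258476⟩))
  (.split 0 2 2 1
  (.leaf (.A ⟨1, 1, 524752, 257682, 269723, 258476⟩))
  (.leaf (.B ⟨1, 0, 137491, 277684, 564756, 283479⟩ ⟨2, 2, 228355, 459463, 927651, 469990⟩)))))))
  (.split 0 1 2 1
  (.split 1 2 1 2
  (.split 2 3 2 1
  (.split 0 3 1 2
  (.split 1 3 1 2
  (.leaf (.B ⟨1, 0, 553230, 564756, 287024, 137491⟩ ⟨2, 2, 906618, 927651, 468233, 228355⟩))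
  (.split 0 2 1 2
  (.split 1 2 1 1
  (.leaf (.B ⟨1, 0, 1127311, 576836, 287024, 564756⟩ ⟨2, 2, 1843012, 939252, 468233, 927651⟩))
  (.split 0 1 1 4
  (.leaf (.A ⟨1, 1, 2136369, 269723, 536832, 524752⟩))
  (.leaf (.B ⟨1, 0, 1127311, 2286384, 576836, 564756⟩ ⟨2, 2, 1843012, 3727027, 939252, 927651⟩))))
  (.split 0 1 1 2
  (.split 1 2 4 1
  (.leaf (.B ⟨1, 0, 1132694, 2286384, 1127311, 564756⟩ ⟨2, 2, 1848558, 3727027, 1843012, 927651⟩))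
  (.leaf (.A ⟨1, 1, 1062687, 269723, 2136369, 524752⟩)))
  (.leaf (.B ⟨1, 0, 553230, 1132694, 1127311, 564756⟩ ⟨2, 2, 906618, 1848558, 1843012, 927651⟩)))))
  (.split 0 2 1 1
  (.split 2 3 2 1
  (.split 1 3 2 1
  (.leaf (.A ⟨0, 1, 146823, 277373, 276920, 139349⟩))
  (.split 1 2 4 1
  (.leaf (.B ⟨1, 0, 565326, 2286384, 1127311, 1132694⟩ ⟨2, 2, 918144, 3727027, 1843012, 1848558⟩))
  (.leaf (.A ⟨1, 1, 535323, 269723, 2136369, 1062687⟩))))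
  (.split 1 2 1 1
  (.leaf (.B ⟨1, 0, 565326, 576836, 287024, 1127311⟩ ⟨2, 2, 918144, 939252, 468233, 1843012⟩))
  (.split 1 3 4 1
  (.leaf (.B ⟨1, 0, 565326, 2286384, 576836, 1127311⟩ ⟨2, 2, 918144, 3727027, 939252, 1843012⟩))
  (.leaf (.A ⟨1, 1, 535323, 269723, 536832, 2136369⟩)))))
  (.split 0 1 1 1
  (.split 1 3 2 1
  (.leaf (.A ⟨0, 1, 147045, 277373, 146823, 139349⟩))
  (.leaf (.A ⟨1, 1, 537915, 269723, 535323, 1062687⟩)))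
  (.leaf (.A ⟨0, 1, 78048, 147045, 146823, 139349⟩)))))
  (.split 0 2 1 4
  (.split 1 2 1 4
  (.split 2 3 4 1
  (.split 0 3 1 2
  (.split 1 3 1 2
  (.leaf (.B ⟨1, 0, 1151563, 1163067, 586205, 287024⟩ ⟨2, 2, 1866243, 1887395, 948167, 468233⟩))
  (.leaf (.A ⟨1, 1, 1081556, 548988, 546201, 1083059⟩)))
  (.leaf (.A ⟨0, 1, 154173, 144995, 144798, 291688⟩)))
  (.leaf (.A ⟨0, 1, 154173, 144995, 18998, 144798⟩)))
  (.split 1 3 1 1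
  (.split 0 3 1 2
  (.split 2 3 1 2
  (.leaf (.B ⟨1, 0, 1151563, 576836, 1163067, 287024⟩ ⟨2, 2, 1866243, 939252, 1887395, 468233⟩))
  (.leaf (.A ⟨1, 1, 1081556, 536832, 548988, 1083059⟩)))
  (.leaf (.A ⟨1, 1, 547492, 536832, 548988, 1081556⟩)))
  (.leaf (.A ⟨1, 1, 547492, 269723, 548988, 536832⟩))))
  (.split 0 3 1 1
  (.split 1 3 1 1
  (.leaf (.B ⟨1, 0, 565326, 576836, 577495, 287024⟩ ⟨2, 2, 918144, 939252, 929793, 468233⟩))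
  (.leaf (.A ⟨1, 1, 535323, 269723, 547492, 536832⟩)))
  (.leaf (.A ⟨1, 1, 268206, 269723, 547492, 535323⟩)))))
  (.split 1 3 1 1
  (.split 0 3 1 2
  (.split 2 3 1 2
  (.leaf (.B ⟨1, 0, 553230, 277684, 564756, 137491⟩ ⟨2, 2, 906618, 459463, 927651, 228355⟩))
  (.split 1 2 1 1
  (.split 0 2 1 2
  (.leaf (.A ⟨1, 1, 1062687, 527365, 269723, 524752⟩))
  (.leaf (.B ⟨1, 0, 553230, 567369, 1132694, 564756⟩ ⟨2, 2, 906618, 930429, 1848558, 927651⟩)))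
  (.leaf (.B ⟨1, 0, 553230, 277684, 567369, 564756⟩ ⟨2, 2, 906618, 459463, 930429, 927651⟩))))
  (.split 0 1 1 1
  (.split 1 2 1 1
  (.split 2 3 2 1
  (.leaf (.B ⟨1, 0, 555821, 567369, 1132694, 553230⟩ ⟨2, 2, 909377, 930429, 1848558, 906618⟩))
  (.leaf (.A ⟨1, 1, 525818, 527365, 269723, 1062687⟩)))
  (.leaf (.B ⟨1, 0, 555821, 277684, 567369, 553230⟩ ⟨2, 2, 909377, 459463, 930429, 906618⟩)))
  (.split 0 2 1 1
  (.split 2 3 2 1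
  (.leaf (.A ⟨0, 1, 147045, 139589, 277373, 139349⟩))
  (.leaf (.A ⟨1, 1, 537915, 525818, 269723, 1062687⟩)))
  (.leaf (.A ⟨0, 1, 78048, 139589, 147045, 139349⟩)))))
  (.leaf (.A ⟨1, 1, 268206, 130020, 269723, 257682⟩))))
  (.split 0 3 2 1
  (.split 2 3 2 1
  (.leaf (.B ⟨1, 0, 275542, 278207, 287024, 137491⟩ ⟨2, 2, 447183, 449936, 468233, 228355⟩))
  (.split 1 2 1 4
  (.split 0 2 1 4
  (.split 2 3 4 1
  (.leaf (.B ⟨1, 0, 574721, 577495, 586205, 287024⟩ ⟨2, 2, 927007, 929793, 948167, 468233⟩))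
  (.leaf (.A ⟨0, 1, 153959, 154173, 18998, 144798⟩)))
  (.leaf (.B ⟨1, 0, 275542, 577495, 574721, 287024⟩ ⟨2, 2, 447183, 929793, 927007, 468233⟩)))
  (.leaf (.B ⟨1, 0, 275542, 278207, 577495, 287024⟩ ⟨2, 2, 447183, 449936, 929793, 468233⟩))))
  (.leaf (.A ⟨0, 1, 23558, 78048, 18998, 77801⟩)))))
  (.split 1 2 1 1
  (.split 0 3 2 1
  (.leaf (.A ⟨1, 1, 268206, 141369, 69804, 130020⟩))
  (.leaf (.A ⟨0, 1, 23558, 42792, 18998, 78048⟩)))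
  (.split 0 1 1 1
  (.leaf (.A ⟨1, 1, 140614, 71182, 141369, 130020⟩))
  (.split 0 3 2 1
  (.leaf (.A ⟨1, 1, 268206, 140614, 141369, 130020⟩))
  (.leaf (.A ⟨0, 1, 23558, 47352, 42792, 78048⟩))))))
  (.leaf (.A ⟨0, 1, 23558, 23775, 7596, 18998⟩)))
  (.split 0 1 3 1
  (.split 1 3 1 2
  (.split 2 3 1 2
  (.split 0 3 1 4
  (.split 1 3 1 4
  (.leaf (.B ⟨1, 0, 294347, 277451, 137491, 34346⟩ ⟨2, 2, 497221, 469070, 228355, 59498⟩))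
  (.split 0 2 1 2
  (.split 1 2 1 1
  (.leaf (.B ⟨1, 0, 569355, 277684, 137491, 277451⟩ ⟨2, 2, 953846, 459463, 228355, 469070⟩))
  (.split 1 3 2 1
  (.leaf (.B ⟨1, 0, 569355, 557523, 277684, 277451⟩ ⟨2, 2, 953846, 931286, 459463, 469070⟩))
  (.split 0 1 1 4
  (.leaf (.A ⟨1, 1, 1049794, 130020, 257682, 507518⟩))
  (.leaf (.B ⟨1, 0, 569355, 1129802, 277684, 557523⟩ ⟨2, 2, 953846, 1878196, 459463, 931286⟩)))))
  (.split 0 1 1 2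
  (.split 1 3 2 1
  (.leaf (.B ⟨1, 0, 574429, 557523, 569355, 277451⟩ ⟨2, 2, 959315, 931286, 953846, 469070⟩))
  (.split 1 2 4 1
  (.leaf (.B ⟨1, 0, 574429, 1129802, 569355, 557523⟩ ⟨2, 2, 959315, 1878196, 953846, 931286⟩))
  (.leaf (.A ⟨1, 1, 534425, 130020, 1049794, 507518⟩))))
  (.leaf (.B ⟨1, 0, 294347, 574429, 569355, 277451⟩ ⟨2, 2, 497221, 959315, 953846, 469070⟩)))))
  (.split 0 2 1 1
  (.split 2 3 2 1
  (.split 1 3 2 1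
  (.leaf (.B ⟨1, 0, 294653, 574429, 569355, 294347⟩ ⟨2, 2, 487620, 959315, 953846, 497221⟩))
  (.split 0 1 1 2
  (.split 1 2 4 1
  (.leaf (.B ⟨1, 0, 574745, 1129802, 569355, 574429⟩ ⟨2, 2, 949724, 1878196, 953846, 959315⟩))
  (.leaf (.A ⟨1, 1, 544742, 130020, 1049794, 534425⟩)))
  (.leaf (.B ⟨1, 0, 294653, 574745, 569355, 574429⟩ ⟨2, 2, 487620, 949724, 953846, 959315⟩))))
  (.split 1 2 1 1
  (.leaf (.B ⟨1, 0, 294653, 277684, 137491, 569355⟩ ⟨2, 2, 487620, 459463, 228355, 953846⟩))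
  (.split 0 1 1 2
  (.split 1 3 4 1
  (.leaf (.B ⟨1, 0, 574745, 1129802, 277684, 569355⟩ ⟨2, 2, 949724, 1878196, 459463, 953846⟩))
  (.leaf (.A ⟨1, 1, 544742, 130020, 257682, 1049794⟩)))
  (.leaf (.B ⟨1, 0, 294653, 574745, 277684, 569355⟩ ⟨2, 2, 487620, 949724, 459463, 953846⟩)))))
  (.split 0 1 1 1
  (.split 1 3 2 1
  (.leaf (.B ⟨1, 0, 296984, 574429, 294653, 294347⟩ ⟨2, 2, 490333, 959315, 487620, 497221⟩))
  (.leaf (.A ⟨1, 1, 286983, 130020, 284652, 534425⟩)))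
  (.leaf (.B ⟨1, 0, 156995, 296984, 294653, 294347⟩ ⟨2, 2, 259405, 490333, 487620, 497221⟩)))))
  (.split 0 2 1 2
  (.split 1 2 1 2
  (.leaf (.B ⟨1, 2, 320233, 288208, 74094, 142491⟩ ⟨2, 2, 478082, 449936, 109439, 228355⟩))
  (.split 0 3 1 2
  (.split 1 3 1 1
  (.leaf (.B ⟨1, 0, 570222, 277684, 278207, 137491⟩ ⟨2, 2, 934704, 459463, 449936, 228355⟩))
  (.split 0 1 1 4
  (.leaf (.A ⟨1, 1, 1070566, 130020, 268206, 257682⟩))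
  (.leaf (.B ⟨1, 0, 570222, 1130572, 278207, 277684⟩ ⟨2, 2, 934704, 1859052, 449936, 459463⟩))))
  (.split 0 1 1 2
  (.split 1 3 4 1
  (.leaf (.A ⟨0, 1, 156797, 279879, 78048, 156263⟩))
  (.leaf (.A ⟨1, 1, 555199, 130020, 268206, 1070566⟩)))
  (.leaf (.A ⟨0, 1, 94903, 156797, 78048, 156263⟩)))))
  (.split 0 3 1 1
  (.split 2 3 1 2
  (.split 1 3 1 1
  (.leaf (.B ⟨1, 0, 294653, 277684, 570222, 137491⟩ ⟨2, 2, 487620, 459463, 934704, 228355⟩))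
  (.split 1 2 4 1
  (.leaf (.B ⟨1, 0, 294653, 1130572, 570222, 277684⟩ ⟨2, 2, 487620, 1859052, 934704, 459463⟩))
  (.leaf (.A ⟨1, 1, 284652, 130020, 1070566, 257682⟩))))
  (.split 1 2 2 1
  (.leaf (.A ⟨0, 1, 78363, 156797, 94903, 156263⟩))
  (.split 1 3 4 1
  (.leaf (.A ⟨0, 1, 78363, 279879, 156797, 156263⟩))
  (.leaf (.A ⟨1, 1, 284652, 130020, 555199, 1070566⟩)))))
  (.leaf (.A ⟨1, 1, 156995, 130020, 295231, 284652⟩)))))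
  (.split 0 2 1 2
  (.split 1 2 1 1
  (.split 2 3 2 1
  (.leaf (.A ⟨1, 1, 295231, 140614, 268206, 130020⟩))
  (.leaf (.A ⟨0, 1, 94903, 47352, 23558, 78048⟩)))
  (.leaf (.A ⟨1, 1, 295231, 71182, 140614, 130020⟩)))
  (.leaf (.A ⟨1, 1, 156995, 71182, 295231, 130020⟩))))
  (.leaf (.B ⟨1, 2, 33537, 171996, 74094, 34346⟩ ⟨2, 2, 49240, 259405, 109439, 59498⟩))))
  (.split 1 3 1 1
  (.split 0 2 3 1
  (.split 2 3 1 2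
  (.split 0 3 1 4
  (.split 1 3 1 2
  (.split 2 3 1 4
  (.leaf (.B ⟨1, 0, 294347, 134108, 277451, 34346⟩ ⟨2, 2, 497221, 230268, 469070, 59498⟩))
  (.split 1 2 1 1
  (.split 0 2 1 2
  (.leaf (.A ⟨1, 1, 534425, 249004, 130020, 247448⟩))
  (.leaf (.B ⟨1, 0, 294347, 274007, 574429, 277451⟩ ⟨2, 2, 497221, 461338, 959315, 469070⟩)))
  (.leaf (.B ⟨1, 0, 294347, 134108, 274007, 277451⟩ ⟨2, 2, 497221, 230268, 461338, 469070⟩))))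
  (.split 1 2 2 1
  (.split 2 3 1 1
  (.split 0 1 1 1
  (.leaf (.A ⟨1, 1, 524890, 250189, 249004, 119107⟩))
  (.leaf (.B ⟨1, 0, 294347, 564894, 274007, 134108⟩ ⟨2, 2, 497221, 950803, 461338, 230268⟩)))
  (.split 0 1 1 1
  (.leaf (.A ⟨1, 1, 524890, 250189, 130020, 249004⟩))
  (.split 0 2 1 2
  (.leaf (.A ⟨1, 1, 534425, 524890, 130020, 249004⟩))
  (.leaf (.B ⟨1, 0, 294347, 564894, 574429, 274007⟩ ⟨2, 2, 497221, 950803, 959315, 461338⟩)))))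
  (.split 0 1 1 4
  (.leaf (.A ⟨1, 1, 515275, 60051, 250189, 119107⟩))
  (.split 0 2 1 1
  (.leaf (.A ⟨1, 1, 524890, 515275, 250189, 119107⟩))
  (.leaf (.B ⟨1, 0, 294347, 555279, 564894, 134108⟩ ⟨2, 2, 497221, 942373, 950803, 230268⟩))))))
  (.split 0 1 1 2
  (.split 1 2 2 1
  (.split 0 2 1 2
  (.split 1 3 1 1
  (.split 2 3 2 1
  (.leaf (.B ⟨1, 0, 567174, 564894, 574429, 294347⟩ ⟨2, 2, 943927, 950803, 959315, 497221⟩))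
  (.leaf (.A ⟨1, 1, 537171, 524890, 130020, 534425⟩)))
  (.leaf (.A ⟨1, 1, 537171, 250189, 130020, 524890⟩)))
  (.split 0 3 1 1
  (.split 1 3 1 1
  (.leaf (.B ⟨1, 0, 581808, 564894, 567174, 294347⟩ ⟨2, 2, 979121, 950803, 943927, 497221⟩))
  (.leaf (.A ⟨1, 1, 551805, 250189, 537171, 524890⟩)))
  (.leaf (.A ⟨1, 1, 277079, 250189, 537171, 551805⟩))))
  (.split 1 3 4 1
  (.split 0 3 1 1
  (.split 2 3 1 1
  (.leaf (.B ⟨1, 0, 581808, 555279, 564894, 294347⟩ ⟨2, 2, 979121, 942373, 950803, 497221⟩))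
  (.leaf (.A ⟨1, 1, 551805, 515275, 250189, 524890⟩)))
  (.leaf (.A ⟨1, 1, 277079, 515275, 250189, 551805⟩)))
  (.leaf (.A ⟨1, 1, 277079, 60051, 250189, 515275⟩))))
  (.split 0 2 1 1
  (.split 1 2 1 2
  (.split 2 3 2 1
  (.leaf (.B ⟨1, 0, 296984, 567174, 574429, 294347⟩ ⟨2, 2, 490333, 943927, 959315, 497221⟩))
  (.leaf (.A ⟨1, 1, 286983, 537171, 130020, 534425⟩)))
  (.leaf (.B ⟨1, 0, 296984, 287080, 567174, 294347⟩ ⟨2, 2, 490333, 481934, 943927, 497221⟩)))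
  (.leaf (.B ⟨1, 0, 156995, 287080, 296984, 294347⟩ ⟨2, 2, 259405, 481934, 490333, 497221⟩)))))
  (.leaf (.A ⟨1, 1, 156995, 60051, 71182, 130020⟩)))
  (.leaf (.B ⟨1, 2, 33537, 65051, 171996, 34346⟩ ⟨2, 2, 49170, 111370, 258658, 59365⟩)))
  (.split 0 1 1 1
  (.leaf (.A ⟨1, 1, 59053, 29999, 71182, 60051⟩))
  (.split 0 2 3 1
  (.leaf (.A ⟨1, 1, 156995, 59053, 71182, 60051⟩))
  (.leaf (.B ⟨1, 2, 33537, 64054, 171996, 65051⟩ ⟨2, 2, 49240, 101050, 259405, 111300⟩))))))))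
  (.split 0 1 1 1
  (.split 1 3 1 1
  (.leaf .R)
  (.split 1 2 2 1
  (.split 0 2 1 1
  (.split 1 2 1 2
  (.split 2 3 2 1
  (.split 0 3 1 1
  (.split 1 3 1 2
  (.split 2 3 1 2
  (.leaf (.A ⟨2, 2, 104551, 199852, 215757, 51882⟩))
  (.split 0 2 1 1
  (.split 1 2 1 2
  (.leaf (.A ⟨0, 2, 47257, 77721, 23775, 40235⟩))
  (.leaf (.B ⟨1, 1, 142609, 123743, 266591, 131283⟩ ⟨2, 0, 216735, 209853, 434263, 215757⟩)))
  (.leaf (.A ⟨2, 2, 104551, 199852, 216735, 215757⟩))))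
  (.split 0 1 1 1
  (.split 1 2 1 1
  (.split 0 2 1 2
  (.split 2 3 2 1
  (.leaf (.B ⟨1, 0, 273078, 135503, 266591, 123743⟩ ⟨2, 0, 435506, 218934, 434263, 209853⟩))
  (.leaf (.A ⟨0, 2, 84478, 37058, 23775, 77721⟩)))
  (.leaf (.B ⟨1, 0, 130191, 135503, 273078, 123743⟩ ⟨2, 0, 211162, 218934, 435506, 209853⟩)))
  (.leaf (.B ⟨1, 0, 130191, 64162, 135503, 123743⟩ ⟨2, 0, 211162, 106951, 218934, 209853⟩)))
  (.split 0 2 1 1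
  (.split 1 2 1 2
  (.split 2 3 2 1
  (.leaf (.B ⟨1, 1, 142609, 278078, 266591, 123743⟩ ⟨2, 0, 216735, 435506, 434263, 209853⟩))
  (.leaf (.A ⟨0, 2, 47257, 84478, 23775, 77721⟩)))
  (.leaf (.B ⟨1, 1, 142609, 135191, 278078, 123743⟩ ⟨2, 0, 216735, 211162, 435506, 209853⟩)))
  (.leaf (.A ⟨2, 2, 104551, 201161, 216735, 199852⟩)))))
  (.split 0 2 2 1
  (.split 1 2 1 1
  (.leaf (.A ⟨0, 2, 53940, 37058, 23775, 23445⟩))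
  (.leaf (.B ⟨1, 1, 154241, 64162, 135503, 71101⟩ ⟨2, 1, 228053, 106951, 218934, 109552⟩)))
  (.leaf (.B ⟨1, 1, 41393, 64162, 154241, 71101⟩ ⟨2, 1, 58036, 106951, 228053, 109552⟩))))
  (.split 0 2 1 2
  (.split 1 2 1 4
  (.leaf (.A ⟨0, 2, 30188, 43475, 7596, 23775⟩))
  (.split 0 1 1 1
  (.split 1 3 1 1
  (.leaf (.A ⟨0, 2, 43283, 37058, 43475, 23775⟩))
  (.leaf (.B ⟨1, 0, 142273, 64162, 146996, 135503⟩ ⟨2, 0, 220709, 106951, 228517, 218934⟩)))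
  (.leaf (.A ⟨0, 2, 30188, 43283, 43475, 23775⟩))))
  (.split 0 3 2 1
  (.split 1 2 1 1
  (.leaf (.A ⟨0, 2, 53940, 43283, 30188, 23775⟩))
  (.split 1 3 1 1
  (.leaf (.A ⟨0, 2, 53940, 37058, 43283, 23775⟩))
  (.leaf (.B ⟨1, 1, 154241, 64162, 147274, 135503⟩ ⟨2, 1, 228053, 106951, 225710, 218934⟩))))
  (.leaf (.B ⟨1, 1, 41393, 64162, 82970, 154241⟩ ⟨2, 1, 58036, 106951, 118809, 228053⟩)))))
  (.leaf (.B ⟨1, 1, 41393, 21786, 64162, 29999⟩ ⟨2, 0, 53036, 46232, 106951, 51882⟩)))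
  (.leaf (.A ⟨2, 2, 22745, 36231, 53036, 51882⟩)))
  (.leaf (.A ⟨2, 2, 22745, 3000, 36231, 51882⟩))))
  (.leaf .R)))


set_option maxRecDepth 100000 in
theorem treeW_ok : check leafW treeW rootCell = true := by decide +kernel

set_option maxRecDepth 100000 in
theorem treeM_ok : check leafM treeM rootCell = true := by decide +kernel

theorem mul11_ev (f g : Form) (x y z w : ℝ) :
    (mul11 f g).ev x y z w = f.ev x y z w * g.ev x y z w := by
  simp only [mul11, Q2.ev, Form.ev]; push_cast; ring

theorem mul12_ev (f : Form) (g : Q2) (x y z w : ℝ) :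
    (mul12 f g).ev x y z w = f.ev x y z w * g.ev x y z w := by
  simp only [mul12, Q2.ev, Q3.ev, Form.ev]; push_cast; ring

theorem mul13_ev (f : Form) (g : Q3) (x y z w : ℝ) :
    (mul13 f g).ev x y z w = f.ev x y z w * g.ev x y z w := by
  simp only [mul13, Q4.ev, Q3.ev, Form.ev]; push_cast; ring

theorem Q2.add_ev (p q : Q2) (x y z w : ℝ) :
    (p.add q).ev x y z w = p.ev x y z w + q.ev x y z w := by
  simp only [Q2.add, Q2.ev]; push_cast; ring

theorem Q4.add_ev (p q : Q4) (x y z w : ℝ) :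
    (p.add q).ev x y z w = p.ev x y z w + q.ev x y z w := by
  simp only [Q4.add, Q4.ev]; push_cast; ring

theorem Form.add_ev (p q : Form) (x y z w : ℝ) :
    (p.add q).ev x y z w = p.ev x y z w + q.ev x y z w := by
  simp only [Form.add, Form.ev]; push_cast; ring

theorem Form.smul_ev (k : ℕ) (p : Form) (x y z w : ℝ) :
    (p.smul k).ev x y z w = k * p.ev x y z w := by
  simp only [Form.smul, Form.ev]; push_cast; ring

theorem Q4.le_ev (p q : Q4) (h : p.le q = true) {x y z w : ℝ} (hx : 0 ≤ x) (hy : 0 ≤ y)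
    (hz : 0 ≤ z) (hw : 0 ≤ w) : p.ev x y z w ≤ q.ev x y z w := by
  simp only [Q4.le, Bool.and_eq_true, Nat.ble_eq, and_assoc] at h
  unfold Q4.ev
  casesm* _ ∧ _
  gcongr

theorem Form.le_iff (f g : Form) : f.le g = true ↔
    f.a ≤ g.a ∧ f.b ≤ g.b ∧ f.c ≤ g.c ∧ f.d ≤ g.d := by
  simp only [Form.le, Bool.and_eq_true, Nat.ble_eq, and_assoc]

theorem Form.le_ev (p q : Form) (h : p.le q = true) {x y z w : ℝ} (hx : 0 ≤ x) (hy : 0 ≤ y)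
    (hz : 0 ≤ z) (hw : 0 ≤ w) : p.ev x y z w ≤ q.ev x y z w := by
  rw [Form.le_iff] at h
  unfold Form.ev
  casesm* _ ∧ _
  gcongr

theorem Form.le_trans' {f g h : Form} (h₁ : f.le g = true) (h₂ : g.le h = true) :
    f.le h = true := by
  rw [Form.le_iff] at *
  omega

theorem Form.sub_ev {f g : Form} (h : f.le g = true) (x y z w : ℝ) :
    (g.sub f).ev x y z w = g.ev x y z w - f.ev x y z w := by
  rw [Form.le_iff] at h
  obtain ⟨h1, h2, h3, h4⟩ := h
  simp only [Form.sub, Form.ev]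
  rw [Nat.cast_sub h1, Nat.cast_sub h2, Nat.cast_sub h3, Nat.cast_sub h4]
  ring

theorem cast_sub_sub (m n : ℕ) : ((m - n : ℕ) : ℝ) = (m : ℝ) - n + ((n - m : ℕ) : ℝ) := by
  rcases le_total m n with h | h
  · rw [Nat.cast_sub h, Nat.sub_eq_zero_of_le h]; simp
  · rw [Nat.cast_sub h, Nat.sub_eq_zero_of_le h]; simp

theorem Form.sub_ev' (f g : Form) (x y z w : ℝ) :
    (f.sub g).ev x y z w = f.ev x y z w - g.ev x y z w + (g.sub f).ev x y z w := by
  simp only [Form.sub, Form.ev]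
  rw [cast_sub_sub f.a, cast_sub_sub f.b, cast_sub_sub f.c, cast_sub_sub f.d]
  ring

theorem finalLe_ev {f g n : Form} {T U S : Q3} (h : finalLe f g n T U S = true)
    {x y z w : ℝ} (hx : 0 ≤ x) (hy : 0 ≤ y) (hz : 0 ≤ z) (hw : 0 ≤ w) :
    f.ev x y z w * T.ev x y z w + g.ev x y z w * U.ev x y z w ≤
      g.ev x y z w * T.ev x y z w + f.ev x y z w * U.ev x y z w
        + n.ev x y z w * S.ev x y z w := by
  have := Q4.le_ev _ _ h hx hy hz hw
  simpa only [add3, Q4.add_ev, mul13_ev] using this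

/-- Derivative of `t (t - p) (t - q) (t - r) (t - s)`. -/
def dP (p q r s t : ℝ) : ℝ :=
  (t - p) * (t - q) * (t - r) * (t - s) + t * (t - q) * (t - r) * (t - s)
    + t * (t - p) * (t - r) * (t - s) + t * (t - p) * (t - q) * (t - s)
    + t * (t - p) * (t - q) * (t - r)

theorem Cell.le23 (C : Cell) : C.X₂.le C.X₃ = true := by
  simp only [Form.le_iff, Cell.X₂, Cell.X₃, Form.smul, Form.add]; omega

theorem Cell.le34 (C : Cell) : C.X₃.le C.X₄ = true := by
  simp only [Form.le_iff, Cell.X₄, Cell.X₃, Form.smul, Form.add]; omega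

theorem Cell.le12 (C : Cell) : C.X₁.le C.X₂ = true := by
  simp only [Form.le_iff, Cell.X₁, Cell.X₂, Form.smul, Form.add]; omega

theorem Form.ev_nonneg (f : Form) {x y z w : ℝ} (hx : 0 ≤ x) (hy : 0 ≤ y)
    (hz : 0 ≤ z) (hw : 0 ≤ w) : 0 ≤ f.ev x y z w := by
  unfold Form.ev; positivity

theorem point0_sound {C : Cell} {t : Form} (h : point0 C t = true)
    {x y z w : ℝ} (hx : 0 ≤ x) (hy : 0 ≤ y) (hz : 0 ≤ z) (hw : 0 ≤ w) :
    t.ev x y z w ≤ C.X₂.ev x y z w ∧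
    dP (C.X₁.ev x y z w) (C.X₂.ev x y z w) (C.X₃.ev x y z w) (C.X₄.ev x y z w)
      (t.ev x y z w) ≤ 0 := by
  simp only [point0, Bool.and_eq_true] at h
  obtain ⟨h2, hp⟩ := h
  have h3 := Form.le_trans' h2 C.le23
  have h4 := Form.le_trans' h3 C.le34
  refine ⟨Form.le_ev _ _ h2 hx hy hz hw, ?_⟩
  have key := finalLe_ev hp hx hy hz hw
  simp only [mul12_ev, mul11_ev, esymm2, Q2.add_ev, Form.add_ev, Form.sub_ev h2,
    Form.sub_ev h3, Form.sub_ev h4, Form.sub_ev' t C.X₁] at key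
  unfold dP
  linarith

theorem point1_sound {C : Cell} {t : Form} (h : point1 C t = true)
    {x y z w : ℝ} (hx : 0 ≤ x) (hy : 0 ≤ y) (hz : 0 ≤ z) (hw : 0 ≤ w) :
    C.X₁.ev x y z w ≤ t.ev x y z w ∧ t.ev x y z w ≤ C.X₃.ev x y z w ∧
    0 ≤ dP (C.X₁.ev x y z w) (C.X₂.ev x y z w) (C.X₃.ev x y z w) (C.X₄.ev x y z w)
      (t.ev x y z w) := by
  simp only [point1, Bool.and_eq_true] at h
  obtain ⟨⟨h1, h3⟩, hp⟩ := h
  have h4 := Form.le_trans' h3 C.le34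
  refine ⟨Form.le_ev _ _ h1 hx hy hz hw, Form.le_ev _ _ h3 hx hy hz hw, ?_⟩
  have key := finalLe_ev hp hx hy hz hw
  simp only [mul12_ev, mul11_ev, Form.add_ev, Form.sub_ev h1,
    Form.sub_ev h3, Form.sub_ev h4, Form.sub_ev' t C.X₂] at key
  unfold dP
  linarith

theorem point2_sound {C : Cell} {t : Form} (h : point2 C t = true)
    {x y z w : ℝ} (hx : 0 ≤ x) (hy : 0 ≤ y) (hz : 0 ≤ z) (hw : 0 ≤ w) :
    C.X₂.ev x y z w ≤ t.ev x y z w ∧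
    dP (C.X₁.ev x y z w) (C.X₂.ev x y z w) (C.X₃.ev x y z w) (C.X₄.ev x y z w)
      (t.ev x y z w) ≤ 0 := by
  simp only [point2, Bool.and_eq_true] at h
  obtain ⟨⟨h2, h4⟩, hp⟩ := h
  have h1 := Form.le_trans' C.le12 h2
  refine ⟨Form.le_ev _ _ h2 hx hy hz hw, ?_⟩
  have key := finalLe_ev hp hx hy hz hw
  simp only [mul12_ev, mul11_ev, esymm2, Q2.add_ev, Form.add_ev, Form.sub_ev h1,
    Form.sub_ev h2, Form.sub_ev h4, Form.sub_ev' t C.X₃] at key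
  unfold dP
  linarith

/-- The gap vector `(a, b, c, d)` lies in the cone `C`. -/
def Mem (C : Cell) (a b c d : ℝ) : Prop :=
  ∃ x y z w : ℝ, 0 ≤ x ∧ 0 ≤ y ∧ 0 ≤ z ∧ 0 ≤ w ∧
    a = 20000 * C.a.ev x y z w ∧ b = 20000 * C.b.ev x y z w ∧
    c = 20000 * C.c.ev x y z w ∧ d = 20000 * C.d.ev x y z w

theorem two_split {α β : ℕ} (hα : 0 < α) (hβ : 0 < β) {x y : ℝ} (hx : 0 ≤ x) (hy : 0 ≤ y) :
    (∃ s r : ℝ, 0 ≤ s ∧ 0 ≤ r ∧ x = α * s ∧ y = β * s + r) ∨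
    (∃ s r : ℝ, 0 ≤ s ∧ 0 ≤ r ∧ x = α * s + r ∧ y = β * s) := by
  have hα' : (0 : ℝ) < α := by exact_mod_cast hα
  have hβ' : (0 : ℝ) < β := by exact_mod_cast hβ
  rcases le_total (β * x) (α * y) with h | h
  · left
    refine ⟨x / α, y - β * (x / α), by positivity, ?_, by field_simp, by ring⟩
    have : β * (x / α) ≤ y := by
      rw [← mul_div_assoc, div_le_iff₀ hα']; linarith
    linarith
  · right
    refine ⟨y / β, x - α * (y / β), by positivity, ?_, by ring, by field_simp⟩
    have : α * (y / β) ≤ x := by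
      rw [← mul_div_assoc, div_le_iff₀ hβ']; linarith
    linarith

theorem form_split (i j : ℕ) {α β : ℕ} (hα : 0 < α) (hβ : 0 < β) {x y z w : ℝ} (hx : 0 ≤ x)
    (hy : 0 ≤ y) (hz : 0 ≤ z) (hw : 0 ≤ w) :
    (∃ x' y' z' w' : ℝ, 0 ≤ x' ∧ 0 ≤ y' ∧ 0 ≤ z' ∧ 0 ≤ w' ∧
      ∀ f : Form, (f.splitL i j α β).ev x' y' z' w' = f.ev x y z w) ∨
    (∃ x' y' z' w' : ℝ, 0 ≤ x' ∧ 0 ≤ y' ∧ 0 ≤ z' ∧ 0 ≤ w' ∧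
      ∀ f : Form, (f.splitR i j α β).ev x' y' z' w' = f.ev x y z w) := by
  unfold Form.splitL Form.splitR
  split
  · rcases two_split hα hβ hx hy with ⟨s, r, hs, hr, rfl, rfl⟩ | ⟨s, r, hs, hr, rfl, rfl⟩
    · exact Or.inl ⟨s, r, z, w, hs, hr, hz, hw, fun f => by simp only [Form.ev]; push_cast; ring⟩
    · exact Or.inr ⟨r, s, z, w, hr, hs, hz, hw, fun f => by simp only [Form.ev]; push_cast; ring⟩
  · rcases two_split hα hβ hx hz with ⟨s, r, hs, hr, rfl, rfl⟩ | ⟨s, r, hs, hr, rfl, rfl⟩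
    · exact Or.inl ⟨s, y, r, w, hs, hy, hr, hw, fun f => by simp only [Form.ev]; push_cast; ring⟩
    · exact Or.inr ⟨r, y, s, w, hr, hy, hs, hw, fun f => by simp only [Form.ev]; push_cast; ring⟩
  · rcases two_split hα hβ hx hw with ⟨s, r, hs, hr, rfl, rfl⟩ | ⟨s, r, hs, hr, rfl, rfl⟩
    · exact Or.inl ⟨s, y, z, r, hs, hy, hz, hr, fun f => by simp only [Form.ev]; push_cast; ring⟩
    · exact Or.inr ⟨r, y, z, s, hr, hy, hz, hs, fun f => by simp only [Form.ev]; push_cast; ring⟩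
  · rcases two_split hα hβ hy hz with ⟨s, r, hs, hr, rfl, rfl⟩ | ⟨s, r, hs, hr, rfl, rfl⟩
    · exact Or.inl ⟨x, s, r, w, hx, hs, hr, hw, fun f => by simp only [Form.ev]; push_cast; ring⟩
    · exact Or.inr ⟨x, r, s, w, hx, hr, hs, hw, fun f => by simp only [Form.ev]; push_cast; ring⟩
  · rcases two_split hα hβ hy hw with ⟨s, r, hs, hr, rfl, rfl⟩ | ⟨s, r, hs, hr, rfl, rfl⟩
    · exact Or.inl ⟨x, s, z, r, hx, hs, hz, hr, fun f => by simp only [Form.ev]; push_cast; ring⟩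
    · exact Or.inr ⟨x, r, z, s, hx, hr, hz, hs, fun f => by simp only [Form.ev]; push_cast; ring⟩
  · rcases two_split hα hβ hz hw with ⟨s, r, hs, hr, rfl, rfl⟩ | ⟨s, r, hs, hr, rfl, rfl⟩
    · exact Or.inl ⟨x, y, s, r, hx, hy, hs, hr, fun f => by simp only [Form.ev]; push_cast; ring⟩
    · exact Or.inr ⟨x, y, r, s, hx, hy, hr, hs, fun f => by simp only [Form.ev]; push_cast; ring⟩
  · exact Or.inl ⟨x, y, z, w, hx, hy, hz, hw, fun f => rfl⟩

theorem check_sound {L : Type} (f : Cell → L → Bool) (a b c d : ℝ) (T : CTree L) :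
    ∀ C : Cell, check f T C = true → Mem C a b c d →
      ∃ (C' : Cell) (e : L), f C' e = true ∧ Mem C' a b c d := by
  induction T with
  | leaf e => exact fun C h hm => ⟨C, e, h, hm⟩
  | split i j α β l r ihl ihr =>
    intro C h hm
    simp only [check, Bool.and_eq_true, Nat.blt_eq] at h
    obtain ⟨⟨⟨hα, hβ⟩, hl⟩, hr⟩ := h
    obtain ⟨x, y, z, w, hx, hy, hz, hw, ha, hb, hc, hd⟩ := hm
    rcases form_split i j hα hβ hx hy hz hw with ⟨x', y', z', w', h1, h2, h3, h4, hf⟩ |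
      ⟨x', y', z', w', h1, h2, h3, h4, hf⟩
    · refine ihl _ hl ⟨x', y', z', w', h1, h2, h3, h4, ?_⟩
      simp only [Cell.splitL, hf]
      exact ⟨ha, hb, hc, hd⟩
    · refine ihr _ hr ⟨x', y', z', w', h1, h2, h3, h4, ?_⟩
      simp only [Cell.splitR, hf]
      exact ⟨ha, hb, hc, hd⟩

theorem root_mem {a b c d : ℝ} (ha : 0 ≤ a) (hb : 0 ≤ b) (hbc : b ≤ c) (hd : 0 ≤ d) :
    Mem rootCell a b c d := by
  refine ⟨a / 20000, d / 20000, (c - b) / 20000, b / 20000, by positivity, by positivity,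
    div_nonneg (by linarith) (by norm_num), by positivity, ?_, ?_, ?_, ?_⟩ <;>
  · simp only [rootCell, Form.ev]; push_cast; ring

/-- Half of a sum of two consecutive gaps. -/
noncomputable def ellR (j : ℕ) (a b c d : ℝ) : ℝ :=
  match j with
  | 0 => (a + b) / 2
  | 1 => (b + c) / 2
  | _ => (c + d) / 2

theorem ell_ev (C : Cell) (j : ℕ) (x y z w : ℝ) :
    10000 * (C.ell j).ev x y z w = ellR j (20000 * C.a.ev x y z w) (20000 * C.b.ev x y z w)
      (20000 * C.c.ev x y z w) (20000 * C.d.ev x y z w) := by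
  unfold Cell.ell ellR
  split <;> simp only [Form.add_ev] <;> ring

theorem dom_sound {C : Cell} {j k : ℕ} (h : dom C j k = true) {a b c d : ℝ}
    (hm : Mem C a b c d) : ellR k a b c d ≤ ellR j a b c d := by
  obtain ⟨x, y, z, w, hx, hy, hz, hw, rfl, rfl, rfl, rfl⟩ := hm
  rw [← ell_ev, ← ell_ev]
  have := Form.le_ev _ _ h hx hy hz hw
  linarith

theorem X_ev (C : Cell) (x y z w : ℝ) :
    C.X₁.ev x y z w = 20000 * C.a.ev x y z w ∧
    C.X₂.ev x y z w = 20000 * C.a.ev x y z w + 20000 * C.b.ev x y z w ∧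
    C.X₃.ev x y z w = 20000 * C.a.ev x y z w + 20000 * C.b.ev x y z w
      + 20000 * C.c.ev x y z w ∧
    C.X₄.ev x y z w = 20000 * C.a.ev x y z w + 20000 * C.b.ev x y z w
      + 20000 * C.c.ev x y z w + 20000 * C.d.ev x y z w := by
  simp only [Cell.X₁, Cell.X₂, Cell.X₃, Cell.X₄, Form.smul_ev, Form.add_ev]
  push_cast
  refine ⟨rfl, ?_, ?_, ?_⟩ <;> ring

theorem ellR_pos {a b c d : ℝ} (ha : 0 < a) (hb : 0 < b) (hc : 0 < c) (hd : 0 < d) (j : ℕ) :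
    0 < ellR j a b c d := by
  unfold ellR
  split <;> positivity

/-- The data of the shifted problem: roots `0, a, a+b, a+b+c, a+b+c+d`, critical points `ξ`. -/
structure Setup (a b c d ξ₁ ξ₂ ξ₃ ξ₄ : ℝ) : Prop where
  ha : 0 < a
  hb : 0 < b
  hc : 0 < c
  hd : 0 < d
  h12 : ξ₁ ≤ ξ₂
  h23 : ξ₂ ≤ ξ₃
  h34 : ξ₃ ≤ ξ₄
  hder : ∀ t : ℝ, dP a (a + b) (a + b + c) (a + b + c + d) t
    = 5 * (t - ξ₁) * (t - ξ₂) * (t - ξ₃) * (t - ξ₄)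

section
variable {a b c d ξ₁ ξ₂ ξ₃ ξ₄ : ℝ}

theorem Setup.lower (S : Setup a b c d ξ₁ ξ₂ ξ₃ ξ₄) :
    ξ₁ < a ∧ a < ξ₂ ∧ ξ₂ < a + b ∧ a + b < ξ₃ ∧ ξ₃ < a + b + c ∧ a + b + c < ξ₄ := by
  obtain ⟨ha, hb, hc, hd, h12, h23, h34, hder⟩ := S
  have e1 := hder a
  have e2 := hder (a + b)
  have e3 := hder (a + b + c)
  have p1 : dP a (a + b) (a + b + c) (a + b + c + d) a = -(a * b * (b + c) * (b + c + d)) := by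
    unfold dP; ring
  have p2 : dP a (a + b) (a + b + c) (a + b + c + d) (a + b) = (a + b) * b * c * (c + d) := by
    unfold dP; ring
  have p3 : dP a (a + b) (a + b + c) (a + b + c + d) (a + b + c)
      = -((a + b + c) * (b + c) * c * d) := by
    unfold dP; ring
  have q1 : 0 < a * b * (b + c) * (b + c + d) := by positivity
  have q2 : 0 < (a + b) * b * c * (c + d) := by positivity
  have q3 : 0 < (a + b + c) * (b + c) * c * d := by positivity
  rw [p1] at e1
  rw [p2] at e2
  rw [p3] at e3
  clear p1 p2 p3 hder
  have k1 : ξ₁ < a := by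
    by_contra! h
    have : 0 ≤ (ξ₁ - a) * (ξ₂ - a) * (ξ₃ - a) * (ξ₄ - a) := by
      have := sub_nonneg.2 h
      have := sub_nonneg.2 (h.trans h12)
      have := sub_nonneg.2 ((h.trans h12).trans h23)
      have := sub_nonneg.2 (((h.trans h12).trans h23).trans h34)
      positivity
    linarith
  have k6 : a + b + c < ξ₄ := by
    by_contra! h
    have : 0 ≤ (a + b + c - ξ₁) * (a + b + c - ξ₂) * (a + b + c - ξ₃) * (a + b + c - ξ₄) := by
      have := sub_nonneg.2 h
      have := sub_nonneg.2 (h34.trans h)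
      have := sub_nonneg.2 (h23.trans (h34.trans h))
      have := sub_nonneg.2 (h12.trans (h23.trans (h34.trans h)))
      positivity
    linarith
  have k3 : ξ₂ < a + b := by
    by_contra! h
    have : 0 ≤ (a + b - ξ₁) * (ξ₂ - (a + b)) * (ξ₃ - (a + b)) * (ξ₄ - (a + b)) := by
      have : 0 ≤ a + b - ξ₁ := by linarith
      have := sub_nonneg.2 h
      have := sub_nonneg.2 (h.trans h23)
      have := sub_nonneg.2 ((h.trans h23).trans h34)
      positivity
    linarith
  have k4 : a + b < ξ₃ := by
    by_contra! h
    have : 0 ≤ (a + b - ξ₁) * (a + b - ξ₂) * (a + b - ξ₃) * (ξ₄ - (a + b)) := by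
      have : 0 ≤ a + b - ξ₁ := by linarith
      have := sub_nonneg.2 h
      have := sub_nonneg.2 (h23.trans h)
      have : 0 ≤ ξ₄ - (a + b) := by linarith
      positivity
    linarith
  have k2 : a < ξ₂ := by
    by_contra! h
    have : 0 ≤ (a - ξ₁) * (a - ξ₂) * (ξ₃ - a) * (ξ₄ - a) := by
      have : 0 ≤ a - ξ₁ := by linarith
      have := sub_nonneg.2 h
      have : 0 ≤ ξ₃ - a := by linarith
      have : 0 ≤ ξ₄ - a := by linarith
      positivity
    linarith
  have k5 : ξ₃ < a + b + c := by
    by_contra! h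
    have : 0 ≤ (a + b + c - ξ₁) * (a + b + c - ξ₂) * (ξ₃ - (a + b + c)) * (ξ₄ - (a + b + c)) := by
      have : 0 ≤ a + b + c - ξ₁ := by linarith
      have : 0 ≤ a + b + c - ξ₂ := by linarith
      have := sub_nonneg.2 h
      have : 0 ≤ ξ₄ - (a + b + c) := by linarith
      positivity
    linarith
  exact ⟨k1, k2, k3, k4, k5, k6⟩

/-- The gaps of the critical points. -/
def gapR (i : ℕ) (ξ₁ ξ₂ ξ₃ ξ₄ : ℝ) : ℝ :=
  match i with
  | 0 => ξ₂ - ξ₁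
  | 1 => ξ₃ - ξ₂
  | _ => ξ₄ - ξ₃

/-- A point that passes the test lies between the two critical points. -/
theorem Setup.between0 (S : Setup a b c d ξ₁ ξ₂ ξ₃ ξ₄) {t : ℝ} (h2 : t ≤ a + b)
    (hs : dP a (a + b) (a + b + c) (a + b + c + d) t ≤ 0) : ξ₁ ≤ t ∧ t ≤ ξ₂ := by
  obtain ⟨k1, k2, k3, k4, k5, k6⟩ := S.lower
  rw [S.hder] at hs
  constructor
  · by_contra! h
    have : 0 < (ξ₁ - t) * (ξ₂ - t) * (ξ₃ - t) * (ξ₄ - t) := by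
      have := sub_pos.2 h
      have : 0 < ξ₂ - t := by linarith
      have : 0 < ξ₃ - t := by linarith
      have : 0 < ξ₄ - t := by linarith
      positivity
    linarith
  · by_contra! h
    have : 0 < (t - ξ₁) * (t - ξ₂) * (ξ₃ - t) * (ξ₄ - t) := by
      have := sub_pos.2 h
      have : 0 < t - ξ₁ := by linarith
      have : 0 < ξ₃ - t := by linarith
      have : 0 < ξ₄ - t := by linarith
      positivity
    linarith

theorem Setup.between1 (S : Setup a b c d ξ₁ ξ₂ ξ₃ ξ₄) {t : ℝ} (h1 : a ≤ t)
    (h3 : t ≤ a + b + c)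
    (hs : 0 ≤ dP a (a + b) (a + b + c) (a + b + c + d) t) : ξ₂ ≤ t ∧ t ≤ ξ₃ := by
  obtain ⟨k1, k2, k3, k4, k5, k6⟩ := S.lower
  rw [S.hder] at hs
  constructor
  · by_contra! h
    have : 0 < (t - ξ₁) * (ξ₂ - t) * (ξ₃ - t) * (ξ₄ - t) := by
      have := sub_pos.2 h
      have : 0 < t - ξ₁ := by linarith
      have : 0 < ξ₃ - t := by linarith
      have : 0 < ξ₄ - t := by linarith
      positivity
    linarith
  · by_contra! h
    have : 0 < (t - ξ₁) * (t - ξ₂) * (t - ξ₃) * (ξ₄ - t) := by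
      have := sub_pos.2 h
      have : 0 < t - ξ₁ := by linarith
      have : 0 < t - ξ₂ := by linarith
      have : 0 < ξ₄ - t := by linarith
      positivity
    linarith

theorem Setup.between2 (S : Setup a b c d ξ₁ ξ₂ ξ₃ ξ₄) {t : ℝ} (h2 : a + b ≤ t)
    (hs : dP a (a + b) (a + b + c) (a + b + c + d) t ≤ 0) : ξ₃ ≤ t ∧ t ≤ ξ₄ := by
  obtain ⟨k1, k2, k3, k4, k5, k6⟩ := S.lower
  rw [S.hder] at hs
  constructor
  · by_contra! h
    have : 0 < (t - ξ₁) * (t - ξ₂) * (ξ₃ - t) * (ξ₄ - t) := by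
      have := sub_pos.2 h
      have : 0 < t - ξ₁ := by linarith
      have : 0 < t - ξ₂ := by linarith
      have : 0 < ξ₄ - t := by linarith
      positivity
    linarith
  · by_contra! h
    have : 0 < (t - ξ₁) * (t - ξ₂) * (t - ξ₃) * (t - ξ₄) := by
      have := sub_pos.2 h
      have : 0 < t - ξ₁ := by linarith
      have : 0 < t - ξ₂ := by linarith
      have : 0 < t - ξ₃ := by linarith
      positivity
    linarith

theorem Setup.cert (S : Setup a b c d ξ₁ ξ₂ ξ₃ ξ₄) {C : Cell} (hm : Mem C a b c d) {e : Cert}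
    (h : certOK C e = true) : ellR e.j a b c d < gapR e.i ξ₁ ξ₂ ξ₃ ξ₄ := by
  have hpos := ellR_pos S.ha S.hb S.hc S.hd e.j
  obtain ⟨x, y, z, w, hx, hy, hz, hw, ea, eb, ec, ed⟩ := hm
  simp only [certOK, Bool.and_eq_true] at h
  obtain ⟨h1, h2⟩ := h
  have hX := X_ev C x y z w
  rw [← ea, ← eb, ← ec, ← ed] at hX
  obtain ⟨X1, X2, X3, X4⟩ := hX
  have hell := ell_ev C e.j x y z w
  rw [← ea, ← eb, ← ec, ← ed] at hell
  have ht := Form.add_ev e.t ((C.ell e.j).smul 10001) x y z w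
  rw [Form.smul_ev] at ht
  push_cast at ht
  rcases e with ⟨i, j, t⟩
  dsimp only at h1 h2 hell ht hpos ⊢
  rcases i with _ | _ | i
  · change ellR j a b c d < ξ₂ - ξ₁
    have s1 := point0_sound (C := C) (t := t) h1 hx hy hz hw
    have s2 := point0_sound (C := C) (t := t.add ((C.ell j).smul 10001)) h2 hx hy hz hw
    rw [X1, X2, X3, X4] at s1 s2
    have b1 := S.between0 s1.1 s1.2
    have b2 := S.between0 s2.1 s2.2
    linarith [b1.1, b2.2]
  · change ellR j a b c d < ξ₃ - ξ₂
    have s1 := point1_sound (C := C) (t := t) h1 hx hy hz hw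
    have s2 := point1_sound (C := C) (t := t.add ((C.ell j).smul 10001)) h2 hx hy hz hw
    rw [X1, X2, X3, X4] at s1 s2
    have b1 := S.between1 s1.1 s1.2.1 s1.2.2
    have b2 := S.between1 s2.1 s2.2.1 s2.2.2
    linarith [b1.1, b2.2]
  · change ellR j a b c d < ξ₄ - ξ₃
    have s1 := point2_sound (C := C) (t := t) h1 hx hy hz hw
    have s2 := point2_sound (C := C) (t := t.add ((C.ell j).smul 10001)) h2 hx hy hz hw
    rw [X1, X2, X3, X4] at s1 s2
    have b1 := S.between2 s1.1 s1.2
    have b2 := S.between2 s2.1 s2.2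
    linarith [b1.1, b2.2]

theorem gapR_le_max (i : ℕ) :
    gapR i ξ₁ ξ₂ ξ₃ ξ₄ ≤ max (max (ξ₂ - ξ₁) (ξ₃ - ξ₂)) (ξ₄ - ξ₃) := by
  unfold gapR
  split <;> simp

theorem min_le_ellR (j : ℕ) :
    min (min ((a + b) / 2) ((b + c) / 2)) ((c + d) / 2) ≤ ellR j a b c d := by
  unfold ellR
  split <;> simp

theorem Setup.core (S : Setup a b c d ξ₁ ξ₂ ξ₃ ξ₄) (hbc : b ≤ c) :
    ¬ (min (min (ξ₂ - ξ₁) (ξ₃ - ξ₂)) (ξ₄ - ξ₃)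
        < min (min ((a + b) / 2) ((b + c) / 2)) ((c + d) / 2) ∧
      max (max (ξ₂ - ξ₁) (ξ₃ - ξ₂)) (ξ₄ - ξ₃)
        ≤ max (max ((a + b) / 2) ((b + c) / 2)) ((c + d) / 2)) := by
  rintro ⟨hlt, hle⟩
  have hroot := root_mem S.ha.le S.hb.le hbc S.hd.le
  have hu : (a + b) / 2 < ξ₂ - ξ₁ := by
    obtain ⟨C, e, he, hm⟩ := check_sound leafW a b c d treeW rootCell treeW_ok hroot
    simp only [leafW, Bool.and_eq_true, Nat.beq_eq] at he
    obtain ⟨⟨hi, hj⟩, hc⟩ := he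
    have := S.cert hm hc
    rw [hi, hj] at this
    exact this
  obtain ⟨C, e, he, hm⟩ := check_sound leafM a b c d treeM rootCell treeM_ok hroot
  cases e with
  | R =>
    simp only [leafM, Bool.and_eq_true] at he
    have d1 : (b + c) / 2 ≤ (a + b) / 2 := dom_sound he.1 hm
    have d2 : (c + d) / 2 ≤ (a + b) / 2 := dom_sound he.2 hm
    rw [max_eq_left d1, max_eq_left d2] at hle
    have := gapR_le_max (ξ₁ := ξ₁) (ξ₂ := ξ₂) (ξ₃ := ξ₃) (ξ₄ := ξ₄) 0
    have h0 : gapR 0 ξ₁ ξ₂ ξ₃ ξ₄ = ξ₂ - ξ₁ := rfl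
    linarith
  | A e =>
    simp only [leafM, Bool.and_eq_true] at he
    obtain ⟨⟨⟨g0, g1⟩, g2⟩, hc⟩ := he
    have d0 : (a + b) / 2 ≤ ellR e.j a b c d := dom_sound g0 hm
    have d1 : (b + c) / 2 ≤ ellR e.j a b c d := dom_sound g1 hm
    have d2 : (c + d) / 2 ≤ ellR e.j a b c d := dom_sound g2 hm
    have h1 := max_le (max_le d0 d1) d2
    have h2 := S.cert hm hc
    have h3 := gapR_le_max (ξ₁ := ξ₁) (ξ₂ := ξ₂) (ξ₃ := ξ₃) (ξ₄ := ξ₄) e.i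
    linarith
  | B e₁ e₂ =>
    simp only [leafM, Bool.and_eq_true, Nat.beq_eq] at he
    obtain ⟨⟨⟨i1, i2⟩, c1⟩, c2⟩ := he
    have g1 := S.cert hm c1
    have g2 := S.cert hm c2
    rw [i1] at g1
    rw [i2] at g2
    have g1' : ellR e₁.j a b c d < ξ₃ - ξ₂ := g1
    have g2' : ellR e₂.j a b c d < ξ₄ - ξ₃ := g2
    have m0 := min_le_ellR (a := a) (b := b) (c := c) (d := d) 0
    have m1 := min_le_ellR (a := a) (b := b) (c := c) (d := d) e₁.j
    have m2 := min_le_ellR (a := a) (b := b) (c := c) (d := d) e₂.j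
    have m0' : min (min ((a + b) / 2) ((b + c) / 2)) ((c + d) / 2) ≤ (a + b) / 2 := m0
    exact absurd hlt (not_lt.2 (le_min (le_min (by linarith) (by linarith)) (by linarith)))

/-- Reflection `t ↦ (a + b + c + d) - t`. -/
theorem Setup.mirror (S : Setup a b c d ξ₁ ξ₂ ξ₃ ξ₄) :
    Setup d c b a (a + b + c + d - ξ₄) (a + b + c + d - ξ₃) (a + b + c + d - ξ₂)
      (a + b + c + d - ξ₁) where
  ha := S.hd
  hb := S.hc
  hc := S.hb
  hd := S.ha
  h12 := by linarith [S.h34]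
  h23 := by linarith [S.h23]
  h34 := by linarith [S.h12]
  hder := fun t => by
    have := S.hder (a + b + c + d - t)
    have e : dP d (d + c) (d + c + b) (d + c + b + a) t
        = dP a (a + b) (a + b + c) (a + b + c + d) (a + b + c + d - t) := by
      unfold dP; ring
    rw [e, this]; ring

theorem Setup.main (S : Setup a b c d ξ₁ ξ₂ ξ₃ ξ₄) :
    ¬ (min (min (ξ₂ - ξ₁) (ξ₃ - ξ₂)) (ξ₄ - ξ₃)
        < min (min ((a + b) / 2) ((b + c) / 2)) ((c + d) / 2) ∧
      max (max (ξ₂ - ξ₁) (ξ₃ - ξ₂)) (ξ₄ - ξ₃)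
        ≤ max (max ((a + b) / 2) ((b + c) / 2)) ((c + d) / 2)) := by
  rcases le_total b c with h | h
  · exact S.core h
  · have := S.mirror.core h
    have r1 : a + b + c + d - ξ₃ - (a + b + c + d - ξ₄) = ξ₄ - ξ₃ := by ring
    have r2 : a + b + c + d - ξ₂ - (a + b + c + d - ξ₃) = ξ₃ - ξ₂ := by ring
    have r3 : a + b + c + d - ξ₁ - (a + b + c + d - ξ₂) = ξ₂ - ξ₁ := by ring
    rw [r1, r2, r3, add_comm d c, add_comm c b, add_comm b a] at this
    have emin (p q r : ℝ) : min (min p q) r = min (min r q) p := by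
      rw [min_comm, min_comm p q, ← min_assoc]
    have emax (p q r : ℝ) : max (max p q) r = max (max r q) p := by
      rw [max_comm, max_comm p q, ← max_assoc]
    rw [emin (ξ₂ - ξ₁), emin ((a + b) / 2), emax (ξ₂ - ξ₁), emax ((a + b) / 2)]
    exact this

end

theorem deriv_quintic (x₁ x₂ x₃ x₄ x₅ x : ℝ) :
    deriv (fun t : ℝ => (t - x₁) * (t - x₂) * (t - x₃) * (t - x₄) * (t - x₅)) x
      = dP (x₂ - x₁) (x₃ - x₁) (x₄ - x₁) (x₅ - x₁) (x - x₁) := by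
  have h (r : ℝ) : HasDerivAt (fun t : ℝ => t - r) 1 x := (hasDerivAt_id x).sub_const r
  have := ((((h x₁).mul (h x₂)).mul (h x₃)).mul (h x₄)).mul (h x₅)
  refine (HasDerivAt.deriv (this.congr_deriv ?_))
  simp only [dP, Pi.mul_apply]
  ring

end Quintic

theorem quintic_LminusRplus_not_realizable
    (x₁ x₂ x₃ x₄ x₅ : ℝ) (h12 : x₁ < x₂) (h23 : x₂ < x₃) (h34 : x₃ < x₄) (h45 : x₄ < x₅)
    (ξ₁ ξ₂ ξ₃ ξ₄ : ℝ) (hξ12 : ξ₁ ≤ ξ₂) (hξ23 : ξ₂ ≤ ξ₃) (hξ34 : ξ₃ ≤ ξ₄)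
    (hder : ∀ x : ℝ,
      deriv (fun t : ℝ => (t - x₁) * (t - x₂) * (t - x₃) * (t - x₄) * (t - x₅)) x
        = 5 * (x - ξ₁) * (x - ξ₂) * (x - ξ₃) * (x - ξ₄))
    (z₁ z₂ z₃ z₄ m M mt Mt : ℝ)
    (hz₁ : z₁ = (x₁ + x₂) / 2) (hz₂ : z₂ = (x₂ + x₃) / 2)
    (hz₃ : z₃ = (x₃ + x₄) / 2) (hz₄ : z₄ = (x₄ + x₅) / 2)
    (hm : m = min (min (z₂ - z₁) (z₃ - z₂)) (z₄ - z₃))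
    (hM : M = max (max (z₂ - z₁) (z₃ - z₂)) (z₄ - z₃))
    (hmt : mt = min (min (ξ₂ - ξ₁) (ξ₃ - ξ₂)) (ξ₄ - ξ₃))
    (hMt : Mt = max (max (ξ₂ - ξ₁) (ξ₃ - ξ₂)) (ξ₄ - ξ₃)) :
    ¬ (mt < m ∧ Mt ≤ M) := by
  have S : Quintic.Setup (x₂ - x₁) (x₃ - x₂) (x₄ - x₃) (x₅ - x₄)
      (ξ₁ - x₁) (ξ₂ - x₁) (ξ₃ - x₁) (ξ₄ - x₁) :=
    { ha := by linarith
      hb := by linarith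
      hc := by linarith
      hd := by linarith
      h12 := by linarith
      h23 := by linarith
      h34 := by linarith
      hder := fun t => by
        have h1 := hder (t + x₁)
        rw [Quintic.deriv_quintic] at h1
        have e2 : x₂ - x₁ + (x₃ - x₂) = x₃ - x₁ := by ring
        have e3 : x₃ - x₁ + (x₄ - x₃) = x₄ - x₁ := by ring
        have e4 : x₄ - x₁ + (x₅ - x₄) = x₅ - x₁ := by ring
        rw [e2, e3, e4]
        rw [add_sub_cancel_right] at h1
        rw [h1]
        ring }
  have key := S.main
  have r1 : ξ₂ - x₁ - (ξ₁ - x₁) = ξ₂ - ξ₁ := by ring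
  have r2 : ξ₃ - x₁ - (ξ₂ - x₁) = ξ₃ - ξ₂ := by ring
  have r3 : ξ₄ - x₁ - (ξ₃ - x₁) = ξ₄ - ξ₃ := by ring
  have s1 : (x₂ - x₁ + (x₃ - x₂)) / 2 = z₂ - z₁ := by rw [hz₁, hz₂]; ring
  have s2 : (x₃ - x₂ + (x₄ - x₃)) / 2 = z₃ - z₂ := by rw [hz₂, hz₃]; ring
  have s3 : (x₄ - x₃ + (x₅ - x₄)) / 2 = z₄ - z₃ := by rw [hz₃, hz₄]; ring
  rw [r1, r2, r3, s1, s2, s3, ← hm, ← hM, ← hmt, ← hMt] at key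
  exact key
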